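/- Every finite reduced vertex algebra is nilpotent: if $V$ is a vertex algebra finitely generated as a $\mathbb{C}[T]$-module with no non-zero abelian ideal, then the Lie conformal algebra $V^{\mathrm{conf}}$ satisfies $V^{[N]} = 0$ for some $N$, where $V^{[0]} = V$ and $V^{[n+1]} = [V, V^{[n]}]$. -/

import Mathlib

open scoped BigOperators

/-- A vertex algebra structure on a complex vector space `V`.
`P n a b` denotes the `n`-th product `a_{(n)} b`, `vac` is the vacuum `𝟙`,
and `D` is the infinitesimal translation operator `T`. -/
structure VertexAlgebra (V : Type*) [AddCommGroup V] [Module ℂ V] where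
  P : ℤ → V →ₗ[ℂ] V →ₗ[ℂ] V
  vac : V
  D : V →ₗ[ℂ] V
  field_ax : ∀ a b : V, ∃ N : ℕ, ∀ n : ℕ, N ≤ n → P n a b = 0
  vac_field : ∀ (n : ℤ) (a : V), P n vac a = if n = -1 then a else 0
  creation : ∀ a : V, P (-1) a vac = a
  creation_pos : ∀ (a : V) (n : ℤ), 0 ≤ n → P n a vac = 0
  D_vac : D vac = 0
  transl_inv : ∀ (n : ℤ) (a b : V), P n (D a) b = (-n : ℂ) • P (n - 1) a b
  D_deriv : ∀ (n : ℤ) (a b : V), D (P n a b) = P n (D a) b + P n a (D b)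
  skew : ∀ (n : ℤ) (a b : V),
    P n a b = ∑ᶠ j : ℕ, (((-1 : ℂ) ^ (n + j + 1)) / (j.factorial : ℂ)) • (D ^ j) (P (n + j) b a)
  borcherds : ∀ (m k : ℤ) (a b c : V),
    P m a (P k b c) - P k b (P m a c)
      = ∑ᶠ j : ℕ, ((Ring.choose m j : ℤ) : ℂ) • P (m + k - j) (P j a b) c

namespace VertexAlgebra

variable {V : Type*} [AddCommGroup V] [Module ℂ V] (W : VertexAlgebra V)

/-- An ideal of a vertex algebra: a `ℂ[T]`-submodule closed under all products with
arbitrary elements of `V`. -/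
def IsIdeal (I : Submodule ℂ V) : Prop :=
  (∀ x ∈ I, W.D x ∈ I) ∧ ∀ (a : V), ∀ b ∈ I, ∀ n : ℤ, W.P n a b ∈ I

/-- `A · B`: the span of all products `a_{(j)} b`, `a ∈ A`, `b ∈ B`, `j ∈ ℤ`. -/
def prodSpan (A B : Submodule ℂ V) : Submodule ℂ V :=
  Submodule.span ℂ {x | ∃ a ∈ A, ∃ b ∈ B, ∃ j : ℤ, x = W.P j a b}

/-- `[A, B]`: the span of all products `a_{(j)} b`, `a ∈ A`, `b ∈ B`, `j ≥ 0`. -/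
def posSpan (A B : Submodule ℂ V) : Submodule ℂ V :=
  Submodule.span ℂ {x | ∃ a ∈ A, ∃ b ∈ B, ∃ j : ℕ, x = W.P j a b}

/-- The sequence `I^1 = I`, `I^{n+1} = I^n · I^n` (indexed so that `nilSeq I n = I^{n+1}`). -/
def nilSeq (I : Submodule ℂ V) : ℕ → Submodule ℂ V
  | 0 => I
  | n + 1 => W.prodSpan (nilSeq I n) (nilSeq I n)

/-- A nil-ideal: an ideal whose sequence of iterated self-products vanishes. -/
def IsNilIdeal (I : Submodule ℂ V) : Prop :=
  W.IsIdeal I ∧ ∃ n : ℕ, W.nilSeq I n = ⊥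

/-- A vertex algebra is finite if it is a finitely generated `ℂ[T]`-module. -/
def IsFinite : Prop :=
  ∃ s : Finset V, ∀ v : V,
    v ∈ Submodule.span ℂ {x | ∃ g ∈ s, ∃ k : ℕ, x = (W.D ^ k) g}

/-- Abelian ideal. -/
def IsAbelianIdeal (I : Submodule ℂ V) : Prop :=
  W.IsIdeal I ∧ ∀ a ∈ I, ∀ b ∈ I, ∀ n : ℤ, W.P n a b = 0

end VertexAlgebra

namespace VertexAlgebra

variable {V : Type*} [AddCommGroup V] [Module ℂ V]

/-- The lower central series of a Lie conformal subalgebra `N` (as a submodule of `V`):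
`N^[0] = N`, `N^[k+1] = [N, N^[k]]`. -/
def lcsOf (W : VertexAlgebra V) (N : Submodule ℂ V) : ℕ → Submodule ℂ V
  | 0 => N
  | k + 1 => W.posSpan N (lcsOf W N k)

/-- A finite reduced vertex algebra: no non-zero abelian ideals. -/
def IsReduced (W : VertexAlgebra V) : Prop :=
  ∀ I : Submodule ℂ V, W.IsAbelianIdeal I → I = ⊥

end VertexAlgebra

/-!
In a reduced vertex algebra annihilators separate points: every `c ≠ 0` survives in the quotient by
a maximal annihilator, which exists since `V` is Noetherian over `ℂ[T]`, and this quotient is a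
domain. So it suffices that every product `a_(n) b`, `n ≥ 0`, vanishes in a finite domain.

In a finite domain a derivation has no nonzero eigenvalue, since multiplying eigenvectors adds
their eigenvalues; in particular torsion elements are constant, i.e. killed by `T`. If some
nonconstant `v` commutes with itself, then comparing ranks of the kernels of its modes shows that
everything commutes. Otherwise there is a noncommutative subalgebra of minimal rank. For a
derivation `f` of it that kills the constants, every bracket `[x_μ ·]` carries the spectral curve of
`f` to a translate of itself; as `μ` takes infinitely many values the curve contains a line, and
`f` is a multiple of `T`. Applied to leading modes this produces `L` with `L_(0) = T` generating the
subalgebra modulo constants, with the brackets of the Virasoro algebra. Computing the central term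
from `L_(-1) L` and from `L_(-3) L` then gives two different values.
-/

open Finset Polynomial

theorem eq_zero_of_sum_choose_smul_eq_zero {A : Type*} [AddCommGroup A] (N : ℕ) :
    ∀ (G : ℕ → A) (m₀ : ℤ), (∀ m ≤ m₀, ∑ j ∈ range N, Ring.choose m j • G j = 0) →
      ∀ j < N, G j = 0 := by
  induction N with
  | zero => simp
  | succ N ih =>
    intro G m₀ h
    have succ_eq_zero : ∀ j < N, G (j + 1) = 0 := by
      refine ih (fun j ↦ G (j + 1)) (m₀ - 1) fun m hm ↦ ?_
      have difference := congrArg₂ (· - ·) (h (m + 1) (by lia)) (h m (by lia))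
      simp only [sum_range_succ', Ring.choose_zero_right, add_sub_add_right_eq_sub,
        ← sum_sub_distrib, sub_zero, Ring.choose_succ_succ, add_smul, add_sub_cancel_right]
        at difference
      exact difference
    intro j hj
    cases j with
    | zero =>
      have e := h m₀ le_rfl
      rw [sum_range_succ', sum_eq_zero fun j hj ↦ by
        rw [succ_eq_zero j (mem_range.1 hj), smul_zero]] at e
      simpa using e
    | succ j => exact succ_eq_zero j (by lia)

namespace VertexAlgebra

variable {V : Type*} [AddCommGroup V] [Module ℂ V] (W : VertexAlgebra V)

section Products

theorem P_D (n : ℤ) (a b : V) :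
    W.P n a (W.D b) = W.D (W.P n a b) + (n : ℂ) • W.P (n - 1) a b := by
  rw [W.D_deriv, W.transl_inv]
  module

theorem exists_forall_le_P_eq_zero (a b : V) :
    ∃ N : ℕ, ∀ n : ℤ, N ≤ n → W.P n a b = 0 := by
  obtain ⟨N, hN⟩ := W.field_ax a b
  refine ⟨N, fun n hn ↦ ?_⟩
  lift n to ℕ using by lia
  exact hN n (by exact_mod_cast hn)

theorem commutator_eq_sum {a b : V} {N : ℕ} (hN : ∀ j : ℕ, N ≤ j → W.P j a b = 0) (m k : ℤ)
    (c : V) :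
    W.P m a (W.P k b c) - W.P k b (W.P m a c)
      = ∑ j ∈ range N, ((Ring.choose m j : ℤ) : ℂ) • W.P (m + k - j) (W.P j a b) c := by
  rw [W.borcherds]
  refine finsum_eq_sum_of_support_subset _ (Function.support_subset_iff'.2 fun j hj ↦ ?_)
  rw [hN j (by simpa using hj), map_zero, LinearMap.zero_apply, smul_zero]

theorem P_natCast_P (a b : V) (m : ℕ) (k : ℤ) (c : V) :
    W.P m a (W.P k b c) = W.P k b (W.P m a c)
      + ∑ j ∈ range (m + 1), (m.choose j : ℂ) • W.P (m + k - j) (W.P j a b) c := by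
  rw [← sub_eq_iff_eq_add', W.borcherds]
  simp only [Ring.choose_natCast, Int.cast_natCast]
  refine finsum_eq_sum_of_support_subset _ (Function.support_subset_iff'.2 fun j hj ↦ ?_)
  rw [Nat.choose_eq_zero_of_lt (by simpa using hj), Nat.cast_zero, zero_smul]

theorem P_eq_sum_swap {n : ℤ} {a b : V} {N : ℕ} (hN : ∀ j : ℕ, N ≤ j → W.P (n + j) b a = 0) :
    W.P n a b = ∑ j ∈ range N,
      ((-1 : ℂ) ^ (n + j + 1) / (j.factorial : ℂ)) • (W.D ^ j) (W.P (n + j) b a) := by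
  rw [W.skew]
  refine finsum_eq_sum_of_support_subset _ (Function.support_subset_iff'.2 fun j hj ↦ ?_)
  rw [hN j (by simpa using hj), map_zero, smul_zero]

theorem exists_forall_le_P_add_eq_zero (n : ℤ) (a b : V) :
    ∃ N : ℕ, ∀ j : ℕ, N ≤ j → W.P (n + j) a b = 0 := by
  obtain ⟨N, hN⟩ := W.exists_forall_le_P_eq_zero a b
  exact ⟨N + n.natAbs, fun j hj ↦ hN _ (by lia)⟩

theorem P_mem_of_forall_swap_mem {S : Submodule ℂ V} (hS : ∀ x ∈ S, W.D x ∈ S) {n : ℤ} {a b : V}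
    (h : ∀ j : ℕ, W.P (n + j) b a ∈ S) : W.P n a b ∈ S := by
  obtain ⟨N, hN⟩ := W.exists_forall_le_P_add_eq_zero n b a
  rw [W.P_eq_sum_swap hN]
  exact S.sum_mem fun j _ ↦ S.smul_mem _ (S.le_comap_pow_of_le_comap (f := W.D) hS j (h j))

theorem P_P_eq_zero_of_forall_P_P_eq_zero {u x y : V}
    (h : ∀ k m : ℤ, W.P k u (W.P m x y) = 0) (m k : ℤ) : W.P m x (W.P k u y) = 0 := by
  obtain ⟨N, hN⟩ := W.field_ax x u
  obtain ⟨M, hM⟩ := W.exists_forall_le_P_eq_zero u y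
  have bracket_P_eq_zero : ∀ l : ℤ, ∀ j < N, W.P (l - j) (W.P j x u) y = 0 := by
    intro l
    refine eq_zero_of_sum_choose_smul_eq_zero N (fun j ↦ W.P (l - j) (W.P j x u) y) (l - M)
      fun m hm ↦ ?_
    have e := W.commutator_eq_sum hN m (l - m) y
    rw [h, hM (l - m) (by lia), map_zero, sub_zero, add_sub_cancel] at e
    simpa only [Int.cast_smul_eq_zsmul] using e.symm
  have e := W.commutator_eq_sum hN m k y
  rwa [h, sub_zero, sum_eq_zero fun j hj ↦ by
    rw [bracket_P_eq_zero _ j (mem_range.1 hj), smul_zero]] at e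

end Products

section Annihilator

/-- The relation `x · y = 0`: all products `x_(n) y`, `n ∈ ℤ`, vanish. -/
def Annihilates (x y : V) : Prop := ∀ n : ℤ, W.P n x y = 0

/-- The annihilator `{y | x · y = 0 for all x ∈ A}` of a set. -/
def annihilator (A : Set V) : Submodule ℂ V where
  carrier := {y | ∀ x ∈ A, W.Annihilates x y}
  add_mem' ha hb x hx n := by rw [map_add, ha x hx, hb x hx, add_zero]
  zero_mem' _ _ _ := map_zero _
  smul_mem' c _ ha x hx n := by rw [map_smul, ha x hx, smul_zero]

variable {W}

theorem mem_annihilator_singleton {x y : V} : y ∈ W.annihilator {x} ↔ W.Annihilates x y :=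
  forall_eq

theorem Annihilates.symm {x y : V} (h : W.Annihilates x y) : W.Annihilates y x := fun _ ↦
  (Submodule.mem_bot ℂ).1 <| W.P_mem_of_forall_swap_mem (by simp) fun _ ↦
    (Submodule.mem_bot ℂ).2 (h _)

theorem Annihilates.P {x y : V} (h : W.Annihilates x y) (k : ℤ) (v : V) :
    W.Annihilates x (W.P k v y) := fun m ↦
  W.P_P_eq_zero_of_forall_P_P_eq_zero (fun _ m ↦ by rw [h m, map_zero]) m k

theorem Annihilates.D {x y : V} (h : W.Annihilates x y) : W.Annihilates x (W.D y) := fun m ↦ by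
  rw [W.P_D, h, h, map_zero, smul_zero, add_zero]

variable (W) in
theorem isIdeal_annihilator (A : Set V) : W.IsIdeal (W.annihilator A) :=
  ⟨fun _ hx a ha ↦ (hx a ha).D, fun v _ hb n a ha ↦ (hb a ha).P n v⟩

variable (W) in
theorem mem_annihilator_annihilator_singleton (x : V) :
    x ∈ W.annihilator (W.annihilator {x} : Set V) :=
  fun _ hz ↦ (mem_annihilator_singleton.1 hz).symm

theorem IsIdeal.P_left_mem {I : Submodule ℂ V} (hI : W.IsIdeal I) {b : V} (hb : b ∈ I) (n : ℤ)
    (a : V) : W.P n b a ∈ I :=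
  W.P_mem_of_forall_swap_mem hI.1 fun _ ↦ hI.2 a b hb _

theorem annihilator_singleton_le_annihilator_P (u : V) (n : ℤ) (y : V) :
    W.annihilator {u} ≤ W.annihilator {W.P n u y} := fun z hz ↦ by
  have h : u ∈ W.annihilator {z} :=
    mem_annihilator_singleton.2 (mem_annihilator_singleton.1 hz).symm
  exact mem_annihilator_singleton.2
    (mem_annihilator_singleton.1 ((W.isIdeal_annihilator {z}).P_left_mem h n y)).symm

theorem IsReduced.eq_zero_of_annihilates_self (hred : W.IsReduced) {x : V}
    (h : W.Annihilates x x) : x = 0 := by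
  have abelian :
      W.IsAbelianIdeal (W.annihilator {x} ⊓ W.annihilator (W.annihilator {x} : Set V)) := by
    refine ⟨⟨fun y hy ↦ ?_, fun a b hb n ↦ ?_⟩, fun a ha b hb ↦ hb.2 a ha.1⟩
    · exact ⟨(W.isIdeal_annihilator _).1 y hy.1, (W.isIdeal_annihilator _).1 y hy.2⟩
    · exact ⟨(W.isIdeal_annihilator _).2 a b hb.1 n, (W.isIdeal_annihilator _).2 a b hb.2 n⟩
  exact (Submodule.mem_bot ℂ).1 <| hred _ abelian ▸
    ⟨mem_annihilator_singleton.2 h, W.mem_annihilator_annihilator_singleton x⟩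

end Annihilator

end VertexAlgebra

/-- A complex subspace stable under `X`, as a `ℂ[X]`-submodule. -/
def submoduleOfXStable {M : Type*} [AddCommGroup M] [Module ℂ M] [Module ℂ[X] M]
    [IsScalarTower ℂ ℂ[X] M] (I : Submodule ℂ M) (hI : ∀ x ∈ I, (X : ℂ[X]) • x ∈ I) :
    Submodule ℂ[X] M where
  carrier := I
  add_mem' := I.add_mem
  zero_mem' := I.zero_mem
  smul_mem' p x hx := by
    induction p using Polynomial.induction_on' with
    | add p q hp hq => rw [add_smul]; exact I.add_mem hp hq
    | monomial n c =>
      rw [← smul_X_eq_monomial, smul_assoc]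
      refine I.smul_mem c ?_
      induction n with
      | zero => rwa [pow_zero, one_smul]
      | succ n ih => rw [pow_succ', mul_smul]; exact hI _ ih

namespace VertexAlgebra

variable {V : Type*} [AddCommGroup V] [Module ℂ V] (W : VertexAlgebra V)

section Quotient

variable {W} {I : Submodule ℂ V} (hI : W.IsIdeal I)

/-- The products induced on the quotient by an ideal. -/
noncomputable def quotientP (n : ℤ) : (V ⧸ I) →ₗ[ℂ] (V ⧸ I) →ₗ[ℂ] (V ⧸ I) :=
  I.liftQ
    { toFun a := I.mapQ I (W.P n a) fun b hb ↦ hI.2 a b hb n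
      map_add' a b := by ext; simp
      map_smul' c a := by ext; simp }
    fun a ha ↦ by
      ext x
      simpa using hI.P_left_mem ha n x

theorem quotientP_mk (n : ℤ) (a b : V) :
    quotientP hI n (Submodule.Quotient.mk a) (Submodule.Quotient.mk b)
      = Submodule.Quotient.mk (W.P n a b) := rfl

theorem mapQ_D_pow_mk (h : I ≤ I.comap W.D) (k : ℕ) (a : V) :
    (I.mapQ I W.D h ^ k) (Submodule.Quotient.mk a) = Submodule.Quotient.mk ((W.D ^ k) a) := by
  rw [← Submodule.mapQ_pow, Submodule.mapQ_apply]

/-- The quotient of a vertex algebra by an ideal. -/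
noncomputable def quotient : VertexAlgebra (V ⧸ I) where
  P := quotientP hI
  vac := Submodule.Quotient.mk W.vac
  D := I.mapQ I W.D hI.1
  field_ax := by
    simp only [Submodule.Quotient.forall]
    intro a b
    obtain ⟨N, hN⟩ := W.field_ax a b
    exact ⟨N, fun n hn ↦ by rw [quotientP_mk, hN n hn, Submodule.Quotient.mk_zero]⟩
  vac_field := by
    simp only [Submodule.Quotient.forall]
    intro n a
    rw [quotientP_mk, W.vac_field]
    split_ifs <;> rfl
  creation := by
    simp only [Submodule.Quotient.forall]
    intro a
    rw [quotientP_mk, W.creation]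
  creation_pos := by
    simp only [Submodule.Quotient.forall]
    intro a n hn
    rw [quotientP_mk, W.creation_pos a n hn, Submodule.Quotient.mk_zero]
  D_vac := by rw [Submodule.mapQ_apply, W.D_vac, Submodule.Quotient.mk_zero]
  transl_inv := by
    simp only [Submodule.Quotient.forall]
    intro n a b
    rw [Submodule.mapQ_apply, quotientP_mk, W.transl_inv, Submodule.Quotient.mk_smul, quotientP_mk]
  D_deriv := by
    simp only [Submodule.Quotient.forall]
    intro n a b
    simp only [quotientP_mk, Submodule.mapQ_apply, W.D_deriv, Submodule.Quotient.mk_add]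
  skew := by
    simp only [Submodule.Quotient.forall, quotientP_mk, mapQ_D_pow_mk]
    intro n a b
    obtain ⟨N, hN⟩ := W.exists_forall_le_P_add_eq_zero n b a
    rw [W.P_eq_sum_swap hN, finsum_eq_sum_of_support_subset (s := range N)]
    · simp only [← Submodule.mkQ_apply, map_sum, map_smul]
    · exact Function.support_subset_iff'.2 fun j hj ↦ by simp [hN j (by simpa using hj)]
  borcherds := by
    simp only [Submodule.Quotient.forall, quotientP_mk]
    intro m k a b c
    obtain ⟨N, hN⟩ := W.field_ax a b
    rw [← Submodule.Quotient.mk_sub, W.commutator_eq_sum hN,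
      finsum_eq_sum_of_support_subset (s := range N)]
    · simp only [← Submodule.mkQ_apply, map_sum, map_smul]
    · exact Function.support_subset_iff'.2 fun j hj ↦ by simp [hN j (by simpa using hj)]

theorem quotient_P_mk (n : ℤ) (a b : V) :
    (quotient hI).P n (Submodule.Quotient.mk a) (Submodule.Quotient.mk b)
      = Submodule.Quotient.mk (W.P n a b) := rfl

theorem isFinite_quotient (hfin : W.IsFinite) : (quotient hI).IsFinite := by
  classical
  obtain ⟨s, hs⟩ := hfin
  refine ⟨s.image I.mkQ, (Submodule.Quotient.forall I).2 fun v ↦ ?_⟩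
  have h := Submodule.mem_map_of_mem (f := I.mkQ) (hs v)
  rw [Submodule.map_span] at h
  refine Submodule.span_mono ?_ h
  rintro _ ⟨_, ⟨g, hg, k, rfl⟩, rfl⟩
  exact ⟨I.mkQ g, mem_image_of_mem _ hg, k, (mapQ_D_pow_mk hI.1 k g).symm⟩

end Quotient

section PolynomialModule

/-- The `ℂ[X]`-module structure on `V` in which `X` acts as the translation operator. -/
noncomputable abbrev polynomialModule : Module ℂ[X] V :=
  Module.compHom V (aeval W.D).toRingHom

theorem polynomialModule_smul (p : ℂ[X]) (v : V) :
    letI := W.polynomialModule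
    p • v = aeval W.D p v := rfl

theorem polynomialModule_isScalarTower :
    letI := W.polynomialModule
    IsScalarTower ℂ ℂ[X] V :=
  letI := W.polynomialModule
  ⟨fun c p v ↦ by
    rw [polynomialModule_smul, polynomialModule_smul, map_smul, LinearMap.smul_apply]⟩

theorem polynomialModule_X_smul (v : V) :
    letI := W.polynomialModule
    (X : ℂ[X]) • v = W.D v := by
  rw [polynomialModule_smul, aeval_X]

variable {W} in
theorem IsFinite.moduleFinite (hfin : W.IsFinite) :
    letI := W.polynomialModule
    Module.Finite ℂ[X] V := by
  let := W.polynomialModule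
  have := W.polynomialModule_isScalarTower
  obtain ⟨s, hs⟩ := hfin
  have span_le : Submodule.span ℂ {x | ∃ g ∈ s, ∃ k : ℕ, x = (W.D ^ k) g}
      ≤ (Submodule.span ℂ[X] (s : Set V)).restrictScalars ℂ := by
    rw [Submodule.span_le]
    rintro _ ⟨g, hg, k, rfl⟩
    have hX : (W.D ^ k) g = (X ^ k : ℂ[X]) • g := by rw [polynomialModule_smul, aeval_X_pow]
    exact hX ▸ Submodule.smul_mem _ _ (Submodule.subset_span hg)
  exact ⟨s, eq_top_iff.2 fun v _ ↦ span_le (hs v)⟩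

end PolynomialModule

section Domain

/-- A vertex algebra is a domain if `x · y = 0` forces `x = 0` or `y = 0`. -/
def HasNoZeroDivisors : Prop := ∀ x y : V, W.Annihilates x y → x = 0 ∨ y = 0

variable {W}

theorem hasNoZeroDivisors_quotient_annihilator {u : V}
    (hu : ∀ (n : ℤ) (y : V), W.P n u y ≠ 0 → W.annihilator {W.P n u y} ≤ W.annihilator {u}) :
    (quotient (W.isIdeal_annihilator {u})).HasNoZeroDivisors := by
  simp only [HasNoZeroDivisors, Annihilates, Submodule.Quotient.forall, quotient_P_mk,
    Submodule.Quotient.mk_eq_zero, mem_annihilator_singleton]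
  intro x y hxy
  by_contra! ⟨⟨m, hm⟩, n, hn⟩
  have x_annihilates : W.Annihilates x (W.P n u y) := fun m ↦
    W.P_P_eq_zero_of_forall_P_P_eq_zero (fun k m ↦ hxy m k) m n
  exact hm (mem_annihilator_singleton.1
    (hu n y hn (mem_annihilator_singleton.2 x_annihilates.symm)) m)

theorem IsFinite.exists_maximal_annihilator (hfin : W.IsFinite) {I : Submodule ℂ V} {c : V}
    (hcI : c ∈ I) (hc : c ≠ 0) :
    ∃ u ∈ I, u ≠ 0 ∧ ∀ w ∈ I, w ≠ 0 →
      W.annihilator {u} ≤ W.annihilator {w} → W.annihilator {w} ≤ W.annihilator {u} := by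
  let := W.polynomialModule
  have := W.polynomialModule_isScalarTower
  have := hfin.moduleFinite
  let ann (u : V) : Submodule ℂ[X] V := submoduleOfXStable (W.annihilator {u}) fun x hx ↦
    W.polynomialModule_X_smul x ▸ (W.isIdeal_annihilator _).1 x hx
  obtain ⟨u, ⟨huI, hu⟩, hmax⟩ :=
    (wellFounded_gt (α := Submodule ℂ[X] V)).onFun (f := ann) |>.has_min {u | u ∈ I ∧ u ≠ 0}
      ⟨c, hcI, hc⟩
  exact ⟨u, huI, hu, fun w hwI hw hle ↦
    (eq_of_le_of_not_lt (α := Submodule ℂ[X] V) (a := ann u) (b := ann w) hle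
      (hmax w ⟨hwI, hw⟩)).ge⟩

theorem IsFinite.exists_hasNoZeroDivisors_quotient (hfin : W.IsFinite) (hred : W.IsReduced)
    {c : V} (hc : c ≠ 0) :
    ∃ (I : Submodule ℂ V) (hI : W.IsIdeal I), (quotient hI).HasNoZeroDivisors ∧ c ∉ I := by
  obtain ⟨u, huc, hu, hmax⟩ :=
    hfin.exists_maximal_annihilator (W.mem_annihilator_annihilator_singleton c) hc
  refine ⟨W.annihilator {u}, W.isIdeal_annihilator _,
    hasNoZeroDivisors_quotient_annihilator fun n y hn ↦ ?_, fun hcu ↦ hu ?_⟩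
  · exact hmax _ ((W.isIdeal_annihilator _).P_left_mem huc n y) hn
      (annihilator_singleton_le_annihilator_P u n y)
  · exact hred.eq_zero_of_annihilates_self <| huc u <|
      mem_annihilator_singleton.2 (mem_annihilator_singleton.1 hcu).symm

end Domain

variable {W}

section Commutes

variable (W) in
/-- Two elements commute if the products `x_(j) y` with `j ≥ 0`, hence all commutators of the
modes of `x` and `y`, vanish. -/
def Commutes (x y : V) : Prop := ∀ j : ℕ, W.P j x y = 0

theorem Commutes.symm {x y : V} (h : W.Commutes x y) : W.Commutes y x := fun n ↦
  (Submodule.mem_bot ℂ).1 <| W.P_mem_of_forall_swap_mem (by simp) fun j ↦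
    (Submodule.mem_bot ℂ).2 (by exact_mod_cast h (n + j))

theorem Commutes.P_P_comm {a b : V} (h : W.Commutes a b) (m k : ℤ) (c : V) :
    W.P m a (W.P k b c) = W.P k b (W.P m a c) := by
  have := W.commutator_eq_sum (N := 0) (fun j _ ↦ h j) m k c
  rwa [sum_range_zero, sub_eq_zero] at this

theorem Commutes.D {a b : V} (h : W.Commutes a b) : W.Commutes a (W.D b) := by
  intro j
  rw [W.P_D, h]
  cases j with
  | zero => simp
  | succ j => simp [h j]

theorem Commutes.P {v x y : V} (hx : W.Commutes v x) (hy : W.Commutes v y) (n : ℤ) :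
    W.Commutes v (W.P n x y) := fun j ↦ by
  rw [hx.P_P_comm, hy, map_zero]

theorem Commutes.mul_comm {a b : V} (h : W.Commutes a b) : W.P (-1) a b = W.P (-1) b a := by
  rw [W.P_eq_sum_swap (N := 1) fun j hj ↦ ?_]
  · simp
  · obtain ⟨i, rfl⟩ := Nat.exists_eq_add_of_le hj
    simpa using h.symm i

theorem Commutes.mul_assoc {a b x : V} (ha : W.Commutes a x) (hb : W.Commutes b x) :
    W.P (-1) (W.P (-1) a b) x = W.P (-1) a (W.P (-1) b x) := by
  rw [(ha.symm.P hb.symm (-1)).symm.mul_comm, ha.symm.P_P_comm, hb.mul_comm]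

theorem P_eq_zero_of_D_eq_zero {e : V} (he : W.D e = 0) {n : ℤ} (hn : n ≠ -1) (b : V) :
    W.P n e b = 0 := by
  have h := W.transl_inv (n + 1) e b
  rw [he, map_zero, LinearMap.zero_apply, add_sub_cancel_right] at h
  refine (smul_eq_zero.1 h.symm).resolve_left ?_
  rw [neg_eq_zero, Int.cast_eq_zero]
  lia

theorem commutes_of_D_eq_zero {e : V} (he : W.D e = 0) (b : V) : W.Commutes e b :=
  fun _ ↦ P_eq_zero_of_D_eq_zero he (by lia) b

theorem factorial_smul_P_neg (k : ℕ) (a b : V) :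
    (k.factorial : ℂ) • W.P (-1 - k) a b = W.P (-1) ((W.D ^ k) a) b := by
  induction k generalizing a with
  | zero => simp
  | succ k ih =>
    rw [pow_succ, Module.End.mul_apply, ← ih, W.transl_inv, smul_smul, Nat.factorial_succ,
      show -1 - (k : ℤ) - 1 = -1 - ((k + 1 : ℕ) : ℤ) by push_cast; ring]
    congr 1
    push_cast
    ring

theorem Commutes.annihilates {a b : V} (h : W.Commutes a b)
    (h' : ∀ k : ℕ, W.P (-1) ((W.D ^ k) a) b = 0) : W.Annihilates a b := by
  intro n
  obtain ⟨k, rfl | rfl⟩ : ∃ k : ℕ, n = k ∨ n = -1 - k := ⟨(max n (-1 - n)).toNat, by lia⟩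
  · exact h k
  · refine (smul_eq_zero.1 ((factorial_smul_P_neg k a b).trans (h' k))).resolve_left ?_
    exact_mod_cast k.factorial_ne_zero

end Commutes

section Modes

theorem HasNoZeroDivisors.eq_zero_of_mul_eq_zero (hW : W.HasNoZeroDivisors) {e b : V}
    (he : W.D e = 0) (h : W.P (-1) e b = 0) : e = 0 ∨ b = 0 := by
  refine hW e b fun n ↦ ?_
  rcases eq_or_ne n (-1) with rfl | hn
  · exact h
  · exact P_eq_zero_of_D_eq_zero he hn b

theorem HasNoZeroDivisors.exists_P_ne_zero (hW : W.HasNoZeroDivisors) {x y : V} (hx : x ≠ 0)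
    (hy : y ≠ 0) : ∃ n : ℤ, W.P n x y ≠ 0 := by
  by_contra! h
  exact (hW x y h).elim hx hy

theorem exists_P_ne_zero_forall_lt {x y : V} (h : ∃ n : ℤ, W.P n x y ≠ 0) :
    ∃ M : ℤ, W.P M x y ≠ 0 ∧ ∀ m, M < m → W.P m x y = 0 := by
  obtain ⟨N, hN⟩ := W.exists_forall_le_P_eq_zero x y
  obtain ⟨M, hM, hmax⟩ := Int.exists_greatest_of_bdd (P := fun n ↦ W.P n x y ≠ 0)
    ⟨N, fun z hz ↦ not_lt.1 fun hlt ↦ hz (hN z hlt.le)⟩ h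
  exact ⟨M, hM, fun m hm ↦ not_not.1 fun h ↦ (hmax m h).not_gt hm⟩

end Modes

section TranslationModule

variable (W) in
/-- The given `ℂ[X]`-module structure on `V` lets `X` act as the translation operator. -/
class IsTranslationModule [Module ℂ[X] V] : Prop where
  X_smul (v : V) : (X : ℂ[X]) • v = W.D v

variable [Module ℂ[X] V] [W.IsTranslationModule]

variable (W) in
theorem X_smul (v : V) : (X : ℂ[X]) • v = W.D v := IsTranslationModule.X_smul v

variable (W) in
theorem X_pow_smul (k : ℕ) (v : V) : (X ^ k : ℂ[X]) • v = (W.D ^ k) v := by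
  induction k with
  | zero => simp
  | succ n ih => rw [pow_succ', mul_smul, W.X_smul, ih, pow_succ', Module.End.mul_apply]

variable [IsScalarTower ℂ ℂ[X] V]

variable (W) in
/-- The commutant of a set. -/
def commutant (S : Set V) : Submodule ℂ[X] V :=
  submoduleOfXStable
    { carrier := {x | ∀ s ∈ S, W.Commutes s x}
      add_mem' := fun ha hb s hs j ↦ by rw [map_add, ha s hs, hb s hs, add_zero]
      zero_mem' := fun _ _ _ ↦ map_zero _
      smul_mem' := fun c _ ha s hs j ↦ by rw [map_smul, ha s hs, smul_zero] }
    fun x hx s hs ↦ W.X_smul x ▸ (hx s hs).D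

theorem mem_commutant_singleton {v x : V} : x ∈ W.commutant {v} ↔ W.Commutes v x :=
  forall_eq

theorem P_mem_commutant {S : Set V} {x y : V} (hx : x ∈ W.commutant S) (hy : y ∈ W.commutant S)
    (n : ℤ) : W.P n x y ∈ W.commutant S :=
  fun s hs ↦ (hx s hs).P (hy s hs) n

theorem Commutes.smul_right {v x : V} (h : W.Commutes v x) (p : ℂ[X]) : W.Commutes v (p • x) :=
  mem_commutant_singleton.1 <| Submodule.smul_mem _ p <| mem_commutant_singleton.2 h

theorem Commutes.smul_left {v x : V} (h : W.Commutes v x) (p : ℂ[X]) : W.Commutes (p • v) x :=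
  (h.symm.smul_right p).symm

end TranslationModule

end VertexAlgebra

section LinearAlgebra

theorem finite_setOf_map_eq_smul {K R M : Type*} [Field K] [CommRing R] [Algebra K R]
    [AddCommGroup M] [Module K M] [Module R M] [IsScalarTower K R M] [IsNoetherian R M]
    (f : Module.End R M) : {c : K | ∃ w ≠ 0, f w = c • w}.Finite := by
  let E (c : K) : Submodule R M := Module.End.eigenspace f (algebraMap K R c)
  have mem_E (c : K) (w : M) : w ∈ E c ↔ f w = c • w := by
    rw [Module.End.mem_eigenspace_iff, algebraMap_smul]
  have restrict_E (c : K) :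
      (E c).restrictScalars K = Module.End.eigenspace (f.restrictScalars K) c := by
    ext w
    rw [Submodule.restrictScalars_mem, mem_E, Module.End.mem_eigenspace_iff,
      LinearMap.restrictScalars_apply]
  have independent : iSupIndep E := fun c ↦ by
    have h := Module.End.eigenspaces_iSupIndep (f.restrictScalars K) c
    simp only [← restrict_E, ← Submodule.restrictScalars_iSup] at h
    rw [Submodule.disjoint_def] at h ⊢
    exact h
  refine (WellFoundedGT.finite_ne_bot_of_iSupIndep independent).subset ?_
  rintro c ⟨w, hw, h⟩
  exact (Submodule.ne_bot_iff _).2 ⟨w, (mem_E c w).2 h, hw⟩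

theorem not_forall_exists_pow_apply_ne_zero {R M : Type*} [Ring R] [AddCommGroup M] [Module R M]
    [IsNoetherian R M] (f : Module.End R M) :
    ¬ ∀ n : ℕ, ∃ w : M, (f ^ n) w ≠ 0 ∧ (f ^ (n + 1)) w = 0 := by
  intro h
  obtain ⟨n, disjoint, hn⟩ := ((Module.End.eventually_disjoint_ker_pow_range_pow f).and
    (Filter.eventually_gt_atTop 0)).exists
  obtain ⟨w, hw, hw'⟩ := h n
  refine hw (Submodule.disjoint_def.1 disjoint _ ?_ ⟨w, rfl⟩)
  rw [LinearMap.mem_ker, ← Module.End.mul_apply, ← pow_add, show n + n = n - 1 + (n + 1) by lia,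
    pow_add, Module.End.mul_apply, hw', map_zero]

theorem pow_succ_mul_of_mul_eq_mul_add {A : Type*} [Ring A] {d l e : A} (hdl : d * l = l * d + e)
    (hde : Commute d e) (n : ℕ) : d ^ (n + 1) * l = l * d ^ (n + 1) + (n + 1) * e * d ^ n := by
  induction n with
  | zero => simpa using hdl
  | succ n ih =>
    have commute_pow : d * (e * d ^ n) = e * d ^ (n + 1) := by
      rw [← mul_assoc, hde.eq, mul_assoc, pow_succ']
    calc d ^ (n + 1 + 1) * l = d * (d ^ (n + 1) * l) := by rw [pow_succ', mul_assoc]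
      _ = d * l * d ^ (n + 1) + (n + 1) * (d * (e * d ^ n)) := by
        rw [ih, mul_add, mul_assoc d l, mul_assoc ((n : A) + 1), ← mul_assoc d ((n : A) + 1),
          ((Nat.cast_commute n d).symm.add_right (Commute.one_right d)).eq, mul_assoc]
      _ = l * d ^ (n + 1 + 1) + ((n + 1 : ℕ) + 1) * e * d ^ (n + 1) := by
        rw [hdl, commute_pow, pow_succ' d (n + 1)]
        push_cast
        noncomm_ring

end LinearAlgebra

namespace VertexAlgebra

variable {V : Type*} [AddCommGroup V] [Module ℂ V] {W : VertexAlgebra V} [Module ℂ[X] V]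

section Derivations

variable (W) in
/-- A derivation of all products, commuting with translation. -/
def IsDerivation (f : V →ₗ[ℂ[X]] V) : Prop :=
  ∀ (n : ℤ) (x y : V), f (W.P n x y) = W.P n (f x) y + W.P n x (f y)

variable [IsScalarTower ℂ ℂ[X] V]

theorem IsDerivation.pow_apply_mul {f : V →ₗ[ℂ[X]] V} (hf : W.IsDerivation f) {x : V}
    (h : f (f x) = 0) (n : ℕ) (w : V) :
    (f ^ (n + 1)) (W.P (-1) x w) =
      W.P (-1) x ((f ^ (n + 1)) w) + ((n + 1 : ℕ) : ℂ) • W.P (-1) (f x) ((f ^ n) w) := by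
  let f' : Module.End ℂ V := f.restrictScalars ℂ
  have h_mul : f' * W.P (-1) x = W.P (-1) x * f' + W.P (-1) (f x) := by
    ext y
    simp [f', hf (-1) x, add_comm]
  have h_comm : Commute f' (W.P (-1) (f x)) := by
    ext y
    simp [f', hf (-1) (f x), h]
  have pow_apply (k : ℕ) (y : V) : (f' ^ k) y = (f ^ k) y := by
    induction k with
    | zero => rfl
    | succ k ih => rw [pow_succ', pow_succ', Module.End.mul_apply, Module.End.mul_apply, ih]; rfl
  have := congrArg (· w) (pow_succ_mul_of_mul_eq_mul_add h_mul h_comm n)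
  simpa [add_smul, Nat.cast_smul_eq_nsmul, pow_apply] using this

variable [Module.Finite ℂ[X] V]

theorem IsDerivation.eigenvalue_eq_zero {f : V →ₗ[ℂ[X]] V} (hf : W.IsDerivation f)
    (hW : W.HasNoZeroDivisors) {w : V} (hw : w ≠ 0) {c : ℂ} (h : f w = c • w) : c = 0 := by
  by_contra hc
  have two_pow_mul_eigenvalue (n : ℕ) : ∃ w ≠ 0, f w = ((2 : ℂ) ^ n * c) • w := by
    induction n with
    | zero => exact ⟨w, hw, by simpa using h⟩
    | succ n ih =>
      obtain ⟨w, hw, h⟩ := ih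
      obtain ⟨m, hm⟩ := hW.exists_P_ne_zero hw hw
      refine ⟨_, hm, ?_⟩
      rw [hf, h, map_smul, map_smul, LinearMap.smul_apply, pow_succ]
      module
  have injective : Function.Injective fun n : ℕ ↦ (2 : ℂ) ^ n * c := fun m n hmn ↦
    Nat.pow_right_injective le_rfl (by exact_mod_cast mul_right_cancel₀ hc hmn)
  refine Set.infinite_range_of_injective injective ((finite_setOf_map_eq_smul (K := ℂ) f).subset ?_)
  exact Set.range_subset_iff.2 two_pow_mul_eigenvalue

theorem IsDerivation.apply_eq_zero_of_apply_apply_eq_zero {f : V →ₗ[ℂ[X]] V} (hf : W.IsDerivation f)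
    (hW : W.HasNoZeroDivisors) {x : V} (h : f (f x) = 0) (hD : W.D (f x) = 0) : f x = 0 := by
  by_contra hne
  refine not_forall_exists_pow_apply_ne_zero f fun n ↦ ?_
  induction n with
  | zero => exact ⟨f x, by simpa using hne, by simpa using h⟩
  | succ n ih =>
    obtain ⟨w, hw, hw'⟩ := ih
    have mul_ne_zero : W.P (-1) (f x) ((f ^ n) w) ≠ 0 := fun h0 ↦
      (hW.eq_zero_of_mul_eq_zero hD h0).elim hne hw
    refine ⟨W.P (-1) x w, ?_, ?_⟩
    · rw [hf.pow_apply_mul h, hw', map_zero, zero_add]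
      exact smul_ne_zero (Nat.cast_ne_zero.2 n.succ_ne_zero) mul_ne_zero
    · rw [hf.pow_apply_mul h, hw', pow_succ', Module.End.mul_apply, hw']
      simp

end Derivations

section Torsion

variable [W.IsTranslationModule]

variable (W) in
theorem isDerivation_lsmul_X : W.IsDerivation (LinearMap.lsmul ℂ[X] V X) := fun n x y ↦ by
  simp only [LinearMap.lsmul_apply, W.X_smul, W.D_deriv]

variable [IsScalarTower ℂ ℂ[X] V] [Module.Finite ℂ[X] V]

theorem HasNoZeroDivisors.D_eq_zero_of_D_D_eq_zero (hW : W.HasNoZeroDivisors) {x : V}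
    (h : W.D (W.D x) = 0) : W.D x = 0 := by
  rw [← W.X_smul] at h ⊢
  exact W.isDerivation_lsmul_X.apply_eq_zero_of_apply_apply_eq_zero hW (x := x)
    (by simpa only [LinearMap.lsmul_apply, ← W.X_smul] using h)
    (by simpa only [LinearMap.lsmul_apply, ← W.X_smul] using h)

theorem HasNoZeroDivisors.D_eq_zero_of_smul_eq_zero (hW : W.HasNoZeroDivisors) {p : ℂ[X]} {x : V}
    (hp : p ≠ 0) (hx : p • x = 0) : W.D x = 0 := by
  have forall_multiset (s : Multiset ℂ) :
      ∀ x : V, (s.map fun a ↦ X - C a).prod • x = 0 → W.D x = 0 := by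
    induction s using Multiset.induction with
    | empty => simp +contextual
    | cons a s ih =>
      intro x hx
      rw [Multiset.map_cons, Multiset.prod_cons] at hx
      obtain rfl | ha := eq_or_ne a 0
      · rw [C_0, sub_zero, mul_comm, mul_smul, W.X_smul] at hx
        exact hW.D_eq_zero_of_D_D_eq_zero (ih _ hx)
      · refine ih x (by_contra fun hne ↦ ha ?_)
        refine (W.isDerivation_lsmul_X).eigenvalue_eq_zero hW hne ?_
        rwa [mul_smul, sub_smul, sub_eq_zero, C_eq_algebraMap, algebraMap_smul] at hx
  rw [(IsAlgClosed.splits p).eq_prod_roots, mul_smul, C_eq_algebraMap, algebraMap_smul] at hx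
  exact forall_multiset _ x ((smul_eq_zero.1 hx).resolve_left (leadingCoeff_ne_zero.2 hp))

end Torsion

section Subalgebra

variable (W) in
/-- A `ℂ[X]`-submodule that is a vertex subalgebra. -/
structure IsSubalgebra (S : Submodule ℂ[X] V) : Prop where
  vac_mem : W.vac ∈ S
  P_mem (n : ℤ) {x y : V} (hx : x ∈ S) (hy : y ∈ S) : W.P n x y ∈ S

variable {S : Submodule ℂ[X] V} (hS : W.IsSubalgebra S) [IsScalarTower ℂ ℂ[X] V]

/-- The products of `W` restricted to a vertex subalgebra. -/
noncomputable def restrictP (n : ℤ) : S →ₗ[ℂ] S →ₗ[ℂ] S :=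
  LinearMap.mk₂ ℂ (fun x y ↦ ⟨W.P n x y, hS.P_mem n x.2 y.2⟩)
    (by intros; ext; simp) (by intros; ext; simp) (by intros; ext; simp) (by intros; ext; simp)

theorem coe_restrictP (n : ℤ) (x y : S) : (restrictP hS n x y : V) = W.P n x y := rfl

theorem restrictP_eq_zero_iff {n : ℤ} {x y : S} :
    restrictP hS n x y = 0 ↔ W.P n (x : V) y = 0 := by
  rw [← coe_restrictP hS, ZeroMemClass.coe_eq_zero]

variable [W.IsTranslationModule]

variable (W S) in
theorem coe_restrictScalars_lsmul_X_pow (k : ℕ) (x : S) :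
    (((LinearMap.lsmul ℂ[X] S X).restrictScalars ℂ ^ k) x : V) = (W.D ^ k) x := by
  induction k with
  | zero => rfl
  | succ k ih =>
    rw [pow_succ', pow_succ', Module.End.mul_apply, Module.End.mul_apply, ← ih, ← W.X_smul]
    rfl

/-- The vertex algebra structure on a vertex subalgebra. -/
noncomputable def restrict : VertexAlgebra S where
  P := restrictP hS
  vac := ⟨W.vac, hS.vac_mem⟩
  D := (LinearMap.lsmul ℂ[X] S X).restrictScalars ℂ
  field_ax a b := by simpa only [restrictP_eq_zero_iff] using W.field_ax (a : V) b
  vac_field n a := by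
    apply Subtype.ext
    rw [coe_restrictP, W.vac_field]
    split_ifs <;> rfl
  creation a := Subtype.ext (W.creation a)
  creation_pos a n hn := Subtype.ext (W.creation_pos a n hn)
  D_vac := Subtype.ext ((W.X_smul _).trans W.D_vac)
  transl_inv n a b := Subtype.ext <| by
    simp [coe_restrictP, W.X_smul, W.transl_inv]
  D_deriv n a b := Subtype.ext <| by
    simp [coe_restrictP, W.X_smul, W.D_deriv]
  skew n a b := by
    obtain ⟨N, hN⟩ := W.exists_forall_le_P_add_eq_zero n (b : V) a
    rw [finsum_eq_sum_of_support_subset (s := range N)]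
    · apply Subtype.ext
      simp only [coe_restrictP, AddSubmonoidClass.coe_finsetSum, Submodule.coe_smul_of_tower,
        W.P_eq_sum_swap hN, W.coe_restrictScalars_lsmul_X_pow]
    · refine Function.support_subset_iff'.2 fun j hj ↦ ?_
      rw [(restrictP_eq_zero_iff hS).2 (hN j (by simpa using hj)), map_zero, smul_zero]
  borcherds m k a b c := by
    obtain ⟨N, hN⟩ := W.field_ax (a : V) b
    rw [finsum_eq_sum_of_support_subset (s := range N)]
    · apply Subtype.ext
      simp only [coe_restrictP, AddSubgroupClass.coe_sub, AddSubmonoidClass.coe_finsetSum,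
        Submodule.coe_smul_of_tower, W.commutator_eq_sum hN]
    · refine Function.support_subset_iff'.2 fun j hj ↦ ?_
      rw [(restrictP_eq_zero_iff hS).2 (hN j (by simpa using hj)), map_zero, LinearMap.zero_apply,
        smul_zero]

theorem coe_restrict_D (x : S) : ((restrict hS).D x : V) = W.D x := W.X_smul x

instance : (restrict hS).IsTranslationModule := ⟨fun _ ↦ rfl⟩

theorem hasNoZeroDivisors_restrict (hW : W.HasNoZeroDivisors) :
    (restrict hS).HasNoZeroDivisors := fun x y h ↦
  (hW x y fun n ↦ congrArg Subtype.val (h n)).imp Subtype.ext Subtype.ext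

end Subalgebra

end VertexAlgebra

section LinearAlgebra

theorem exists_common_eigenvector {K E ι : Type*} [Field K] [IsAlgClosed K] [AddCommGroup E]
    [Module K E] [FiniteDimensional K E] [Nontrivial E] (f : ι → Module.End K E)
    (hf : ∀ i j, Commute (f i) (f j)) : ∃ c ≠ 0, ∀ i, ∃ χ : K, f i c = χ • c := by
  obtain ⟨U, ⟨hU, stable⟩, minimal⟩ := wellFounded_lt.has_min
    {U : Submodule K E | U ≠ ⊥ ∧ ∀ i, U ∈ Module.End.invtSubmodule (f i)}
    ⟨⊤, top_ne_bot, fun i ↦ Module.End.invtSubmodule.top_mem (f i)⟩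
  have acts_by_scalar (i : ι) : ∃ χ : K, ∀ x ∈ U, f i x = χ • x := by
    have : Nontrivial U := Submodule.nontrivial_iff_ne_bot.2 hU
    obtain ⟨χ, hχ⟩ := Module.End.exists_eigenvalue ((f i).restrict (stable i))
    obtain ⟨w, hw⟩ := hχ.exists_hasEigenvector
    have mem_iff (x : E) : x ∈ U ⊓ (f i).eigenspace χ ↔ x ∈ U ∧ f i x = χ • x := by
      rw [Submodule.mem_inf, Module.End.mem_eigenspace_iff]
    refine ⟨χ, fun x hx ↦ ((mem_iff x).1 ?_).2⟩
    refine (inf_le_left.lt_or_eq.resolve_left (minimal (U ⊓ (f i).eigenspace χ) ⟨?_, ?_⟩)).ge hx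
    · refine (Submodule.ne_bot_iff _).2 ⟨w, (mem_iff w).2 ⟨w.2, ?_⟩, by simpa using hw.2⟩
      exact congrArg Subtype.val hw.apply_eq_smul
    · intro j x hx
      obtain ⟨hxU, hx⟩ := (mem_iff x).1 hx
      refine (mem_iff _).2 ⟨stable j hxU, ?_⟩
      rw [← Module.End.mul_apply, (hf i j).eq, Module.End.mul_apply, hx, map_smul]
  obtain ⟨c, hcU, hc⟩ := Submodule.exists_mem_ne_zero_of_ne_bot hU
  exact ⟨c, hc, fun i ↦ (acts_by_scalar i).imp fun χ h ↦ h c hcU⟩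

theorem exists_fg_map_eq_range {K E F : Type*} [Field K] [AddCommGroup E] [Module K E]
    [AddCommGroup F] [Module K F] (φ : E →ₗ[K] F) (h : φ.range.FG) :
    ∃ G : Submodule K E, G.FG ∧ G.map φ = φ.range := by
  obtain ⟨s, hs⟩ := φ.rangeRestrict.exists_rightInverse_of_surjective φ.range_rangeRestrict
  have : Module.Finite K φ.range := Module.Finite.iff_fg.2 h
  refine ⟨s.range, Module.Finite.fg_top.map s |>.of_le (by rw [LinearMap.range_eq_map]), ?_⟩
  have comp_eq : φ ∘ₗ s = φ.range.subtype := by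
    ext x
    exact congrArg Subtype.val (LinearMap.congr_fun hs x)
  rw [← LinearMap.range_comp, comp_eq, Submodule.range_subtype]

end LinearAlgebra

namespace VertexAlgebra

variable {V : Type*} [AddCommGroup V] [Module ℂ V] {W : VertexAlgebra V}

section LeadingMode

theorem P_eq_zero_of_forall_lt_swap {x y : V} {M : ℤ} (hM : ∀ m, M < m → W.P m x y = 0) {m : ℤ}
    (hm : M < m) : W.P m y x = 0 := by
  rw [W.P_eq_sum_swap (N := 0) fun j _ ↦ hM _ (by lia), sum_range_zero]

theorem P_eq_swap_of_forall_lt {x y : V} {M : ℤ} (hM : ∀ m, M < m → W.P m x y = 0) :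
    W.P M y x = (-1 : ℂ) ^ (M + 1) • W.P M x y := by
  rw [W.P_eq_sum_swap (N := 1) fun j hj ↦ hM _ (by lia)]
  simp

theorem P_sub_one_eq_swap_of_forall_lt {x y : V} {M : ℤ} (hM : ∀ m, M < m → W.P m x y = 0) :
    W.P (M - 1) y x = (-1 : ℂ) ^ M • (W.P (M - 1) x y - W.D (W.P M x y)) := by
  rw [W.P_eq_sum_swap (N := 2) fun j hj ↦ hM _ (by lia)]
  simp [sum_range_succ, zpow_add_one₀, zpow_sub_one₀, smul_sub, ← sub_eq_add_neg]

theorem Commutes.P_sub_one_mul_left {g x y : V} (hgy : W.Commutes g y) {M : ℤ}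
    (hM : ∀ m, M < m → W.P m x y = 0) :
    W.P (M - 1) (W.P (-1) g x) y =
      W.P (-1) g (W.P (M - 1) x y) + W.P (-1) (W.D g) (W.P M x y) := by
  have P_mul (m : ℤ) : W.P m y (W.P (-1) g x) = W.P (-1) g (W.P m y x) := hgy.symm.P_P_comm _ _ _
  have sign : (-1 : ℂ) ^ M = 1 ∨ (-1 : ℂ) ^ M = -1 :=
    mul_self_eq_one_iff.1 (by rw [← mul_zpow]; simp)
  rw [P_sub_one_eq_swap_of_forall_lt fun m hm ↦ ?_, P_mul, P_mul,
    P_sub_one_eq_swap_of_forall_lt hM, P_eq_swap_of_forall_lt hM]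
  · simp only [map_smul, map_sub, W.D_deriv (-1) g, smul_add, smul_sub, smul_smul,
      zpow_add_one₀ (neg_ne_zero.2 one_ne_zero : (-1 : ℂ) ≠ 0)]
    rcases sign with sign | sign <;> simp only [sign] <;> module
  · rw [P_mul, P_eq_zero_of_forall_lt_swap hM hm, map_zero]

end LeadingMode

section TranslatesMul

variable [Module ℂ[X] V]

variable (W) in
/-- The map `p ↦ (p • g)_(-1) c`; its range is spanned by the negative modes of `g` applied
to `c`. -/
noncomputable def translatesMul [IsScalarTower ℂ ℂ[X] V] (g c : V) : ℂ[X] →ₗ[ℂ] V :=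
  (W.P (-1)).flip c ∘ₗ (LinearMap.toSpanSingleton ℂ[X] V g).restrictScalars ℂ

variable [IsScalarTower ℂ ℂ[X] V]

theorem translatesMul_apply (g c : V) (p : ℂ[X]) :
    W.translatesMul g c p = W.P (-1) (p • g) c := rfl

variable (W) in
/-- The elements with only finitely many linearly independent negative modes on `c`. -/
noncomputable def finiteTranslates (c : V) : Submodule ℂ[X] V where
  carrier := {g | (W.translatesMul g c).range.FG}
  zero_mem' := by
    have : W.translatesMul 0 c = 0 := by ext; simp [translatesMul_apply]
    rw [Set.mem_ofPred_eq, this, LinearMap.range_zero]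
    exact Submodule.fg_bot
  add_mem' ha hb := (ha.sup hb).of_le <| by
    rintro _ ⟨p, rfl⟩
    rw [translatesMul_apply, smul_add, map_add]
    exact Submodule.add_mem_sup ⟨p, rfl⟩ ⟨p, rfl⟩
  smul_mem' p _ ha := ha.of_le <| by
    rintro _ ⟨q, rfl⟩
    exact ⟨q * p, by rw [translatesMul_apply, translatesMul_apply, mul_smul]⟩

theorem fg_map_mul_of_le_finiteTranslates {G : Submodule ℂ[X] V} (hG : G.FG) {c : V}
    (h : G ≤ W.finiteTranslates c) : ((G.restrictScalars ℂ).map ((W.P (-1)).flip c)).FG := by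
  obtain ⟨s, rfl⟩ := hG
  have fg_iSup : (⨆ g ∈ s, (W.translatesMul g c).range).FG :=
    Submodule.fg_biSup s _ fun g hg ↦ h (Submodule.subset_span hg)
  refine fg_iSup.of_le ?_
  rintro _ ⟨g, hg, rfl⟩
  suffices ∀ p : ℂ[X], W.P (-1) (p • g) c ∈ ⨆ g ∈ s, (W.translatesMul g c).range by
    simpa using this 1
  induction (hg : g ∈ Submodule.span ℂ[X] (s : Set V)) using Submodule.span_induction with
  | mem x hx =>
    exact fun p ↦ le_biSup (fun g ↦ (W.translatesMul g c).range) hx ⟨p, rfl⟩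
  | zero => simp
  | add x y _ _ hx hy =>
    intro p
    rw [smul_add, map_add]
    exact Submodule.add_mem _ (hx p) (hy p)
  | smul q x _ hx => exact fun p ↦ mul_smul p q x ▸ hx (p * q)

variable [W.IsTranslationModule]

theorem smul_mul_mul_mem {c g₁ g₂ : V} {S : Submodule ℂ V}
    (hS : ∀ p q : ℂ[X], W.P (-1) (W.P (-1) (p • g₁) (q • g₂)) c ∈ S) (r : ℂ[X]) :
    W.P (-1) (r • W.P (-1) g₁ g₂) c ∈ S := by
  have X_pow_smul_mem (n : ℕ) (p q : ℂ[X]) :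
      W.P (-1) ((X ^ n : ℂ[X]) • (W.P (-1) (p • g₁) (q • g₂))) c ∈ S := by
    induction n generalizing p q with
    | zero => simpa using hS p q
    | succ n ih =>
      rw [pow_succ, mul_smul, W.X_smul, W.D_deriv, smul_add, map_add, LinearMap.add_apply,
        ← W.X_smul, ← W.X_smul, ← mul_smul, ← mul_smul]
      exact S.add_mem (ih _ _) (ih _ _)
  induction r using Polynomial.induction_on' with
  | add p q hp hq => rw [add_smul, map_add]; exact S.add_mem hp hq
  | monomial n a =>
    rw [← smul_X_eq_monomial, smul_assoc, map_smul, LinearMap.smul_apply]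
    exact S.smul_mem _ (by simpa using X_pow_smul_mem n 1 1)

theorem mul_mem_finiteTranslates {a b c : V} (hab : W.Commutes a b) (hac : W.Commutes a c)
    (hbc : W.Commutes b c) (ha : a ∈ W.finiteTranslates c) (hb : b ∈ W.finiteTranslates c) :
    W.P (-1) a b ∈ W.finiteTranslates c := by
  obtain ⟨F, hF, map_F⟩ := exists_fg_map_eq_range _ ha
  obtain ⟨G, hG, map_G⟩ := exists_fg_map_eq_range _ hb
  let B : ℂ[X] →ₗ[ℂ] ℂ[X] →ₗ[ℂ] V :=
    LinearMap.mk₂ ℂ (fun p q ↦ W.P (-1) (p • a) (W.P (-1) (q • b) c))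
      (by simp [add_smul]) (by simp) (by simp [add_smul]) (by simp)
  refine (Submodule.FG.map₂ B hF hG).of_le ?_
  rintro _ ⟨r, rfl⟩
  refine smul_mul_mul_mem (fun p q ↦ ?_) r
  obtain ⟨p', hp', hp⟩ : W.translatesMul a c p ∈ F.map (W.translatesMul a c) := map_F ▸ ⟨p, rfl⟩
  obtain ⟨q', hq', hq⟩ : W.translatesMul b c q ∈ G.map (W.translatesMul b c) := map_G ▸ ⟨q, rfl⟩
  simp only [translatesMul_apply] at hp hq
  have swap (p : ℂ[X]) : W.P (-1) (p • a) (W.P (-1) (q' • b) c) =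
      W.P (-1) (q' • b) (W.P (-1) (p • a) c) :=
    ((hab.smul_left p).smul_right q').P_P_comm _ _ _
  rw [(hac.smul_left p).mul_assoc (hbc.smul_left q), ← hq, swap, ← hp, ← swap]
  exact Submodule.apply_mem_map₂ B hp' hq'

end TranslatesMul

section CommonEigenvector

theorem exists_common_eigenvector_mul [Module ℂ[X] V] {G : Submodule ℂ[X] V}
    [IsScalarTower ℂ ℂ[X] V] {c : V}
    (hGG : ∀ a ∈ G, ∀ b ∈ G, W.Commutes a b) (hGc : ∀ a ∈ G, W.Commutes a c)
    (hmul : ∀ a ∈ G, ∀ b ∈ G, W.P (-1) a b ∈ G)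
    (hfg : ((G.restrictScalars ℂ).map ((W.P (-1)).flip c)).FG)
    (hne : (G.restrictScalars ℂ).map ((W.P (-1)).flip c) ≠ ⊥) :
    ∃ g ∈ G, W.P (-1) g c ≠ 0 ∧ ∀ a ∈ G, ∃ χ : ℂ,
      W.P (-1) a (W.P (-1) g c) = χ • W.P (-1) g c := by
  let U := (G.restrictScalars ℂ).map ((W.P (-1)).flip c)
  have : FiniteDimensional ℂ U := Module.Finite.iff_fg.2 hfg
  have : Nontrivial U := Submodule.nontrivial_iff_ne_bot.2 hne
  have stable (a : G) : ∀ x ∈ U, W.P (-1) (a : V) x ∈ U := by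
    rintro _ ⟨b, hb, rfl⟩
    exact ⟨W.P (-1) a b, hmul a a.2 b hb, (hGc a a.2).mul_assoc (hGc b hb)⟩
  obtain ⟨⟨_, g, hg, rfl⟩, hg0, hχ⟩ := exists_common_eigenvector
    (fun a : G ↦ (W.P (-1) (a : V)).restrict (stable a)) fun a b ↦ LinearMap.ext fun x ↦
      Subtype.ext ((hGG a a.2 b b.2).P_P_comm (-1) (-1) x)
  refine ⟨g, hg, fun h0 ↦ hg0 (Subtype.ext h0), fun a ha ↦ ?_⟩
  obtain ⟨χ, h⟩ := hχ ⟨a, ha⟩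
  exact ⟨χ, congrArg Subtype.val h⟩

-- Compare the two leading modes of `(g_(-1) c) _(·) c`, where `g_(-1)` acts as a scalar.
theorem HasNoZeroDivisors.D_mul_eq_zero_of_eigenvector (hW : W.HasNoZeroDivisors) {g c : V}
    (hgc : W.Commutes g c) (hc : c ≠ 0) {χ χ' : ℂ} (hχ : W.P (-1) g c = χ • c)
    (hχ' : W.P (-1) (W.D g) c = χ' • c) : W.P (-1) (W.D g) c = 0 := by
  obtain ⟨M, hM, hlt⟩ := exists_P_ne_zero_forall_lt (hW.exists_P_ne_zero hc hc)
  have h := hgc.P_sub_one_mul_left hlt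
  rw [hχ, hgc.P_P_comm, hχ, hgc.symm.D.symm.P_P_comm, hχ', map_smul, map_smul, map_smul,
    LinearMap.smul_apply, left_eq_add] at h
  rw [hχ', (smul_eq_zero.1 h).resolve_right hM, zero_smul]

variable [Module ℂ[X] V] [W.IsTranslationModule] [IsScalarTower ℂ ℂ[X] V] [Module.Finite ℂ[X] V]

theorem HasNoZeroDivisors.notMem_finiteTranslates (hW : W.HasNoZeroDivisors) {v c : V}
    (hvv : W.Commutes v v) (hDv : W.D v ≠ 0) (hc : c ≠ 0) (hvc : W.Commutes v c) :
    v ∉ W.finiteTranslates c := by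
  intro hv
  let A := W.commutant (W.commutant {v} : Set V)
  let G := A ⊓ W.finiteTranslates c
  have D_pow_mem (k : ℕ) : (W.D ^ k) v ∈ G := by
    rw [← W.X_pow_smul]
    exact Submodule.smul_mem _ _ ⟨fun s hs ↦ (mem_commutant_singleton.1 hs).symm, hv⟩
  have commutes {a x : V} (ha : a ∈ G) (hx : W.Commutes v x) : W.Commutes a x :=
    (ha.1 x (mem_commutant_singleton.2 hx)).symm
  have v_commutes {a : V} (ha : a ∈ G) : W.Commutes v a := (commutes ha hvv).symm
  obtain ⟨g, hg, hg0, hχ⟩ := exists_common_eigenvector_mul (W := W) (G := G) (c := c)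
    (fun a ha b hb ↦ commutes ha (v_commutes hb)) (fun a ha ↦ commutes ha hvc)
    (fun a ha b hb ↦ ⟨P_mem_commutant ha.1 hb.1 _, mul_mem_finiteTranslates
      (commutes ha (v_commutes hb)) (commutes ha hvc) (commutes hb hvc) ha.2 hb.2⟩)
    (fg_map_mul_of_le_finiteTranslates (IsNoetherian.noetherian G) inf_le_right) fun h0 ↦ by
      have mul_eq_zero (k : ℕ) : W.P (-1) ((W.D ^ k) v) c = 0 :=
        (Submodule.eq_bot_iff _).1 h0 _ ⟨_, D_pow_mem k, rfl⟩
      refine (hW v c (hvc.annihilates mul_eq_zero)).elim (fun h ↦ hDv ?_) hc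
      rw [h, map_zero]
  have hvg : W.Commutes v (W.P (-1) g c) := (v_commutes hg).P hvc _
  have D_pow_mul_eq_zero (k : ℕ) : W.P (-1) ((W.D ^ k) (W.D v)) (W.P (-1) g c) = 0 := by
    obtain ⟨χ, h⟩ := hχ _ (D_pow_mem k)
    obtain ⟨χ', h'⟩ := hχ _ (D_pow_mem (k + 1))
    rw [pow_succ', Module.End.mul_apply] at h'
    rw [← Module.End.mul_apply (W.D ^ k), ← pow_succ, pow_succ', Module.End.mul_apply]
    exact hW.D_mul_eq_zero_of_eigenvector (commutes (D_pow_mem k) hvg) hg0 h h'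
  exact (hW _ _ (hvg.symm.D.symm.annihilates D_pow_mul_eq_zero)).elim hDv hg0

end CommonEigenvector

end VertexAlgebra

theorem exists_forall_natDegree_le_coeff_ne_zero {R ι : Type*} [Semiring R] [Finite ι]
    {q : ι → R[X]} {i : ι} (hi : q i ≠ 0) :
    ∃ Q : ℕ, (∀ i, (q i).natDegree ≤ Q) ∧ ∃ i, (q i).coeff Q ≠ 0 := by
  have : Nonempty ι := ⟨i⟩
  obtain ⟨k, hk⟩ := Finite.exists_max fun i ↦ (q i).degree
  have hqk : q k ≠ 0 := fun h0 ↦ hi (by simpa [h0] using hk i)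
  exact ⟨(q k).natDegree, fun i ↦ natDegree_le_natDegree (hk i), k, by simpa using hqk⟩

namespace VertexAlgebra

variable {V : Type*} [AddCommGroup V] [Module ℂ V] {W : VertexAlgebra V}

section LeadingMode

theorem exists_leading_mode_of_not_commutes {y b : V} (h : ¬ W.Commutes y b) :
    ∃ p : ℕ, W.P p y b ≠ 0 ∧ ∀ n : ℕ, p < n → W.P n y b = 0 := by
  simp only [Commutes, not_forall] at h
  obtain ⟨n, hn⟩ := h
  obtain ⟨M, hM, hlt⟩ := exists_P_ne_zero_forall_lt ⟨(n : ℤ), hn⟩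
  lift M to ℕ using (Int.natCast_nonneg n).trans (not_lt.1 fun hMn ↦ hn (hlt n hMn))
  exact ⟨M, hM, fun m hm ↦ hlt m (by exact_mod_cast hm)⟩

theorem P_D_pow_eq_zero_of_forall_lt {y b : V} {p : ℕ} (h : ∀ n : ℕ, p < n → W.P n y b = 0)
    {k n : ℕ} (hn : p + k < n) : W.P n y ((W.D ^ k) b) = 0 := by
  induction k generalizing n with
  | zero => exact h n hn
  | succ k ih =>
    obtain ⟨m, rfl⟩ : ∃ m, n = m + 1 := ⟨n - 1, by lia⟩
    rw [pow_succ', Module.End.mul_apply, W.P_D, ih (by lia), Nat.cast_succ, add_sub_cancel_right,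
      ih (by lia), map_zero, smul_zero, add_zero]

theorem P_add_D_pow_of_forall_lt {y b : V} {p : ℕ} (h : ∀ n : ℕ, p < n → W.P n y b = 0) (k : ℕ) :
    W.P (p + k : ℕ) y ((W.D ^ k) b) = ((p + k).descFactorial k : ℂ) • W.P p y b := by
  induction k with
  | zero => simp
  | succ k ih =>
    rw [pow_succ', Module.End.mul_apply, W.P_D, P_D_pow_eq_zero_of_forall_lt h (by lia), map_zero,
      zero_add, ← add_assoc, Nat.cast_succ, add_sub_cancel_right, ih, smul_smul,
      Nat.succ_descFactorial_succ]
    push_cast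
    rfl

theorem P_mul_right {y b w : V} {n : ℕ} (hw : W.P n y w = 0)
    (h : ∀ j : ℕ, W.Commutes (W.P j y b) w) :
    W.P n y (W.P (-1) b w) = W.P (-1) (W.P n y b) w := by
  rw [W.P_natCast_P, hw, map_zero, zero_add, sum_range_succ, sum_eq_zero fun j hj ↦ ?_, zero_add,
    Nat.choose_self, Nat.cast_one, one_smul, add_sub_cancel_left]
  have := h j (n - 1 - j)
  rw [mem_range] at hj
  rw [show ((n - 1 - j : ℕ) : ℤ) = n + -1 - j by lia] at this
  rw [this, smul_zero]

variable [Module ℂ[X] V] [W.IsTranslationModule] [IsScalarTower ℂ ℂ[X] V]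

theorem P_D_pow_mem_of_forall_P_mem {S : Submodule ℂ[X] V} {y b : V}
    (h : ∀ j : ℕ, W.P j y b ∈ S) (k j : ℕ) : W.P j y ((W.D ^ k) b) ∈ S := by
  induction k generalizing j with
  | zero => exact h j
  | succ k ih =>
    rw [pow_succ', Module.End.mul_apply, W.P_D, ← W.X_smul]
    refine S.add_mem (S.smul_mem _ (ih j)) ?_
    cases j with
    | zero => simp
    | succ j =>
      rw [Nat.cast_succ, add_sub_cancel_right]
      exact S.smul_of_tower_mem _ (ih j)

theorem P_add_smul_of_forall_lt {y b : V} {p : ℕ} (h : ∀ n : ℕ, p < n → W.P n y b = 0) {Q : ℕ}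
    {q : ℂ[X]} (hq : q.natDegree ≤ Q) :
    W.P (p + Q : ℕ) y (q • b) = ((p + Q).descFactorial Q * q.coeff Q : ℂ) • W.P p y b := by
  have P_monomial_smul (n k : ℕ) : W.P n y (monomial k (q.coeff k) • b) =
      q.coeff k • W.P n y ((W.D ^ k) b) := by
    rw [← smul_X_eq_monomial, smul_assoc, W.X_pow_smul, map_smul]
  conv_lhs => rw [q.as_sum_range' (Q + 1) (by lia), sum_smul, map_sum, sum_range_succ]
  rw [sum_eq_zero fun k hk ↦ ?_, zero_add, P_monomial_smul, P_add_D_pow_of_forall_lt h, smul_smul,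
    mul_comm]
  rw [mem_range] at hk
  rw [P_monomial_smul, P_D_pow_eq_zero_of_forall_lt h (by lia), smul_zero]

-- In a `ℂ[X]`-linear relation, the top mode isolates the coefficients of maximal degree.
theorem linearIndependent_of_leading_modes {ι : Type*} [Finite ι] {y : V} {m : ι → V} {p : ℕ}
    (h : ∀ i, ∀ n : ℕ, p < n → W.P n y (m i) = 0)
    (hli : LinearIndependent ℂ fun i ↦ W.P p y (m i)) : LinearIndependent ℂ[X] m := by
  have := Fintype.ofFinite ι
  rw [Fintype.linearIndependent_iff]
  by_contra! ⟨q, hq, i, hi⟩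
  obtain ⟨Q, hQ, k, hk⟩ := exists_forall_natDegree_le_coeff_ne_zero hi
  have sum_eq_zero : ∑ i, ((p + Q).descFactorial Q * (q i).coeff Q : ℂ) • W.P p y (m i) = 0 := by
    simp only [← P_add_smul_of_forall_lt (h _) (hQ _), ← map_sum, hq, map_zero]
  have descFactorial_ne_zero : ((p + Q).descFactorial Q : ℂ) ≠ 0 :=
    Nat.cast_ne_zero.2 (Nat.descFactorial_pos.2 (Nat.le_add_left _ _)).ne'
  exact mul_ne_zero descFactorial_ne_zero hk (Fintype.linearIndependent_iff.1 hli _ sum_eq_zero k)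

end LeadingMode

variable [Module ℂ[X] V] [W.IsTranslationModule] [IsScalarTower ℂ ℂ[X] V] [Module.Finite ℂ[X] V]

-- If `c` were a nonzero leading mode of `y` on `b`, then products of a high derivative of `b`
-- with translates of `v` would have leading modes `(p • v)_(-1) c`: too many independent ones.
theorem HasNoZeroDivisors.commutes_of_forall_commutes_P (hW : W.HasNoZeroDivisors) {v y b : V}
    (hvv : W.Commutes v v) (hDv : W.D v ≠ 0) (h : ∀ j : ℕ, W.Commutes v (W.P j y b)) :
    W.Commutes y b := by
  by_contra hyb
  obtain ⟨p, hp, hlt⟩ := exists_leading_mode_of_not_commutes hyb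
  obtain ⟨s, hcard, hli⟩ := LinearMap.le_rank_iff_exists_linearIndependent_finset
    (f := W.translatesMul v (W.P p y b)) (n := Module.finrank ℂ[X] V + 1).1 <|
      not_lt.1 fun hlt ↦ hW.notMem_finiteTranslates hvv hDv hp (h p) <|
        Module.Finite.iff_fg.1 <| Module.rank_lt_aleph0_iff.1 <|
          hlt.trans Cardinal.natCast_lt_aleph0
  obtain ⟨I, hI⟩ : ∃ I : ℕ, ∀ g ∈ s, ∀ n : ℕ, I ≤ n → W.P n y (g • v) = 0 := by
    choose N hN using fun g : ℂ[X] ↦ W.field_ax y (g • v)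
    exact ⟨s.sup N, fun g hg n hn ↦ hN g n ((le_sup hg).trans hn)⟩
  have commutes (g : ℂ[X]) (j : ℕ) : W.Commutes (W.P j y ((W.D ^ I) b)) (g • v) :=
    (mem_commutant_singleton.1 <| P_D_pow_mem_of_forall_P_mem
      (fun j ↦ mem_commutant_singleton.2 (h j)) I j).symm.smul_right g
  let m (g : s) : V := W.P (-1) ((W.D ^ I) b) ((g : ℂ[X]) • v)
  have P_m (g : s) {n : ℕ} (hn : p + I ≤ n) :
      W.P n y (m g) = W.P (-1) (W.P n y ((W.D ^ I) b)) ((g : ℂ[X]) • v) :=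
    P_mul_right (hI g g.2 n (by lia)) (commutes g)
  have descFactorial_ne_zero : ((p + I).descFactorial I : ℂ) ≠ 0 :=
    Nat.cast_ne_zero.2 (Nat.descFactorial_pos.2 (Nat.le_add_left _ _)).ne'
  have linearIndependent : LinearIndependent ℂ[X] m := by
    refine linearIndependent_of_leading_modes (W := W) (y := y) (p := p + I) (fun g n hn ↦ ?_) ?_
    · rw [P_m g hn.le, P_D_pow_eq_zero_of_forall_lt hlt hn, map_zero, LinearMap.zero_apply]
    · suffices (fun g : s ↦ W.P (p + I : ℕ) y (m g)) = fun g : s ↦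
          Units.mk0 _ descFactorial_ne_zero • W.translatesMul v (W.P p y b) (g : ℂ[X]) from
        this ▸ hli.units_smul fun _ ↦ Units.mk0 _ descFactorial_ne_zero
      funext g
      rw [P_m g le_rfl, P_add_D_pow_of_forall_lt hlt, LinearMap.map_smul₂,
        ((h p).smul_left g).symm.mul_comm]
      rfl
  simpa [hcard] using linearIndependent.fintype_card_le_finrank

end VertexAlgebra

section LinearAlgebra

section MapSMul

variable {K M N : Type*} [CommSemiring K] [AddCommMonoid M] [AddCommMonoid N]
  [Module K M] [Module K N] [Module K[X] M] [Module K[X] N] [IsScalarTower K K[X] M]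
  [IsScalarTower K K[X] N]

theorem map_smul_of_map_X_smul_eq_X_add_C_smul (f : M →ₗ[K] N) {μ : K}
    (h : ∀ x, f ((X : K[X]) • x) = (X + C μ) • f x) (q : K[X]) (x : M) :
    f (q • x) = taylor μ q • f x := by
  induction q using Polynomial.induction_on' with
  | add p q hp hq => rw [add_smul, map_add, hp, hq, map_add, add_smul]
  | monomial n c =>
    rw [← smul_X_eq_monomial, smul_assoc, map_smul, LinearMap.map_smul, smul_assoc]
    congr 1
    induction n with
    | zero => simp
    | succ n ih => rw [pow_succ', mul_smul, h, ih, taylor_mul, taylor_X, mul_smul]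

theorem map_smul_of_map_X_smul (f : M →ₗ[K] N) (h : ∀ x, f ((X : K[X]) • x) = (X : K[X]) • f x)
    (q : K[X]) (x : M) : f (q • x) = q • f x := by
  rw [map_smul_of_map_X_smul_eq_X_add_C_smul f (μ := 0) (by simpa using h), taylor_zero]

/-- A linear map commuting with the action of `X`, as a map of polynomial modules. -/
def linearMapOfMapXSmul (f : M →ₗ[K] N) (h : ∀ x, f ((X : K[X]) • x) = (X : K[X]) • f x) :
    M →ₗ[K[X]] N where
  toFun := f
  map_add' := f.map_add
  map_smul' := map_smul_of_map_X_smul f h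

end MapSMul

variable {K M : Type*} [Field K] [AddCommGroup M] [Module K M]

theorem isNilpotent_of_aeval_eq_zero {R : Type*} [IsAlgClosed K] [CommRing R] [Algebra K R]
    [Module R M] [IsScalarTower K R M] {f : Module.End R M}
    (hf : ∀ w ≠ 0, ∀ c : K, f w = c • w → c = 0) {g : K[X]} (hg : g ≠ 0) (h : aeval f g = 0) :
    IsNilpotent f := by
  have forall_multiset (s : Multiset K) (x : M) :
      aeval f (s.map fun a ↦ X - C a).prod x = 0 → (f ^ s.card) x = 0 := by
    induction s using Multiset.induction generalizing x with
    | empty => simp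
    | cons a s ih =>
      intro hx
      rw [Multiset.card_cons]
      rw [Multiset.map_cons, Multiset.prod_cons] at hx
      rcases eq_or_ne a 0 with rfl | ha
      · rw [C_0, sub_zero, mul_comm, map_mul, Module.End.mul_apply, aeval_X] at hx
        rw [pow_succ, Module.End.mul_apply, ih _ hx]
      · rw [map_mul, Module.End.mul_apply, map_sub, aeval_X, aeval_C, LinearMap.sub_apply,
          sub_eq_zero] at hx
        rw [pow_succ', Module.End.mul_apply, ih x (not_not.1 fun hne ↦ ha (hf _ hne a hx)),
          map_zero]
  refine ⟨g.roots.card, LinearMap.ext fun x ↦ forall_multiset _ x ?_⟩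
  have aeval_g := LinearMap.congr_fun h x
  rw [(IsAlgClosed.splits g).eq_prod_roots, map_mul, Module.End.mul_apply, aeval_C] at aeval_g
  exact (smul_eq_zero.1 aeval_g).resolve_left (leadingCoeff_ne_zero.2 hg)

theorem exists_smul_mem_of_finrank_le {R N : Type*} [CommRing R] [IsDomain R] [IsNoetherianRing R]
    [AddCommGroup N] [Module R N] [Module.Finite R N] {N₁ N₂ : Submodule R N} (hle : N₁ ≤ N₂)
    (hr : Module.finrank R N₂ ≤ Module.finrank R N₁) {y : N} (hy : y ∈ N₂) :
    ∃ h : R, h ≠ 0 ∧ h • y ∈ N₁ := by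
  have finrank_comap := (Submodule.comapSubtypeEquivOfLe hle).finrank_eq
  have finrank_add := Submodule.finrank_quotient_add_finrank (N₁.comap N₂.subtype)
  have finrank_quotient : Module.finrank R (N₂ ⧸ N₁.comap N₂.subtype) = 0 := by lia
  obtain ⟨h, h0, hy0⟩ := Module.finrank_eq_zero_iff.1 finrank_quotient
    (Submodule.Quotient.mk ⟨y, hy⟩)
  rw [← Submodule.Quotient.mk_smul, Submodule.Quotient.mk_eq_zero] at hy0
  exact ⟨h, h0, hy0⟩

variable [Module K[X] M] [IsScalarTower K K[X] M]

theorem map_smul_eq_add_derivative_smul {f : Module.End K[X] M} {E : M →ₗ[K] M} {c : K}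
    (h : ∀ x, E ((X : K[X]) • x) = (X : K[X]) • E x + c • f x) (q : K[X]) (x : M) :
    E (q • x) = q • E x + c • (derivative q • f x) := by
  induction q using Polynomial.induction_on' with
  | add p q hp hq =>
    simp only [add_smul, map_add, hp, hq, smul_add]
    abel
  | monomial k a =>
    rw [← smul_X_eq_monomial, smul_assoc, map_smul, smul_assoc, derivative_smul, smul_assoc,
      smul_comm c, ← smul_add]
    congr 1
    induction k with
    | zero => simp
    | succ k ih =>
      rw [pow_succ', mul_smul, h, ih, derivative_mul, map_smul]
      simp only [derivative_X, one_mul, smul_add, add_smul, mul_smul]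
      rw [smul_comm c X, smul_comm X (X ^ k : K[X])]
      abel

theorem sum_derivative_smul_pow_eq_zero {f : Module.End K[X] M} {E : M →ₗ[K] M} {c : K}
    (hc : c ≠ 0) (hE : ∀ x, E ((X : K[X]) • x) = (X : K[X]) • E x + c • f x)
    (hEf : ∀ x, E (f x) = f (E x)) {n k : ℕ} {p : Fin n → K[X]}
    (h : ∑ i, p i • f ^ (k + i : ℕ) = 0) : ∑ i, derivative (p i) • f ^ (k + 1 + i : ℕ) = 0 := by
  have E_pow (m : ℕ) (x : M) : E ((f ^ m) x) = (f ^ m) (E x) := by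
    induction m generalizing x with
    | zero => rfl
    | succ m ih => rw [pow_succ, Module.End.mul_apply, ih, hEf, ← Module.End.mul_apply]
  have h_apply (x : M) : ∑ i, p i • (f ^ (k + i : ℕ)) x = 0 := by
    simpa using LinearMap.congr_fun h x
  ext x
  have E_sum := congrArg E (h_apply x)
  rw [map_sum, map_zero] at E_sum
  simp only [map_smul_eq_add_derivative_smul hE, E_pow, sum_add_distrib, h_apply,
    zero_add, ← smul_sum, smul_eq_zero_iff_right hc] at E_sum
  simpa [add_right_comm k 1, pow_succ'] using E_sum

-- Bracketing with `E` differentiates the coefficients of a relation; after enough steps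
-- they are constants.
theorem exists_aeval_eq_zero [CharZero K] [Module.Finite K[X] M] {f : Module.End K[X] M}
    {E : M →ₗ[K] M} {c : K} (hc : c ≠ 0)
    (hE : ∀ x, E ((X : K[X]) • x) = (X : K[X]) • E x + c • f x)
    (hEf : ∀ x, E (f x) = f (E x)) : ∃ g : K[X], g ≠ 0 ∧ aeval f g = 0 := by
  obtain ⟨p, hp, hpf⟩ := LinearMap.exists_monic_and_aeval_eq_zero K[X] f
  have sum_iterate (m : ℕ) : ∑ i : Fin (p.natDegree + 1),
      derivative^[m] (p.coeff i) • f ^ (m + i : ℕ) = 0 := by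
    induction m with
    | zero => simpa [aeval_eq_sum_range, sum_range] using hpf
    | succ m ih =>
      simpa only [Function.iterate_succ_apply'] using sum_derivative_smul_pow_eq_zero hc hE hEf ih
  have coeff_last : p.coeff (Fin.last p.natDegree : ℕ) ≠ 0 := by simpa using hp.ne_zero
  obtain ⟨Q, hQ, k, hk⟩ := exists_forall_natDegree_le_coeff_ne_zero
    (q := fun i : Fin (p.natDegree + 1) ↦ p.coeff i) coeff_last
  have iterate_derivative (i : Fin (p.natDegree + 1)) :
      derivative^[Q] (p.coeff i) = C (Q.factorial • (p.coeff i).coeff Q) := by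
    ext m
    rw [coeff_iterate_derivative, coeff_C]
    split_ifs with hm
    · simp [hm, Nat.descFactorial_self]
    · rw [coeff_eq_zero_of_natDegree_lt ((hQ i).trans_lt (by lia)), smul_zero]
  refine ⟨∑ i : Fin (p.natDegree + 1), C (Q.factorial • (p.coeff i).coeff Q) * X ^ (Q + i : ℕ),
    fun h0 ↦ ?_, ?_⟩
  · have coeff_eq_zero := congrArg (coeff · (Q + k)) h0
    simp only [finsetSum_coeff, coeff_C_mul, coeff_X_pow, add_right_inj,
      Fin.val_inj] at coeff_eq_zero
    simp [Q.factorial_ne_zero, hk] at coeff_eq_zero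
  · rw [← sum_iterate Q, map_sum]
    refine sum_congr rfl fun i _ ↦ ?_
    rw [iterate_derivative, C_mul', map_smul, aeval_X_pow, C_eq_algebraMap, algebraMap_smul]

end LinearAlgebra

namespace VertexAlgebra

variable {V : Type*} [AddCommGroup V] [Module ℂ V] {W : VertexAlgebra V}

theorem P_zero_D (a b : V) : W.P 0 a (W.D b) = W.D (W.P 0 a b) := by
  simp [W.P_D]

theorem P_succ_D (n : ℕ) (a b : V) :
    W.P (n + 1 : ℕ) a (W.D b) = W.D (W.P (n + 1 : ℕ) a b) + (n + 1 : ℂ) • W.P n a b := by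
  simp [W.P_D]

theorem P_natCast_D_of_forall_lt {n : ℕ} {v x : V} (h : ∀ j < n, W.P j v x = 0) :
    W.P n v (W.D x) = W.D (W.P n v x) := by
  cases n with
  | zero => exact P_zero_D v x
  | succ n => rw [P_succ_D, h n (Nat.lt_succ_self n), smul_zero, add_zero]

theorem P_natCast_P_of_forall_lt {n : ℕ} {v x : V} (h : ∀ j < n, W.P j v x = 0) (m : ℤ) (y : V) :
    W.P n v (W.P m x y) = W.P m (W.P n v x) y + W.P m x (W.P n v y) := by
  rw [W.P_natCast_P, sum_range_succ, sum_eq_zero, zero_add, Nat.choose_self, Nat.cast_one, one_smul,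
    add_comm, add_sub_cancel_left]
  intro j hj
  rw [h j (mem_range.1 hj), map_zero, LinearMap.zero_apply, smul_zero]

variable [Module ℂ[X] V] [W.IsTranslationModule] [IsScalarTower ℂ ℂ[X] V]

section ModeKernel

variable (W) in
/-- The elements killed by the modes `v_(0), …, v_(n-1)`. -/
def modeKernel (v : V) (n : ℕ) : Submodule ℂ[X] V :=
  submoduleOfXStable
    { carrier := {y | ∀ j < n, W.P j v y = 0}
      add_mem' := fun ha hb j hj ↦ by rw [map_add, ha j hj, hb j hj, add_zero]
      zero_mem' := fun _ _ ↦ map_zero _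
      smul_mem' := fun c _ ha j hj ↦ by rw [map_smul, ha j hj, smul_zero] }
    fun x hx j hj ↦ by
      rw [W.X_smul, P_natCast_D_of_forall_lt fun i hi ↦ hx i (hi.trans hj), hx j hj, map_zero]

theorem modeKernel_antitone (v : V) : Antitone (W.modeKernel v) :=
  fun _ _ hnm _ hx j hj ↦ hx j (hj.trans_le hnm)

theorem isSubalgebra_modeKernel (v : V) (n : ℕ) : W.IsSubalgebra (W.modeKernel v n) where
  vac_mem j _ := W.creation_pos v j (Int.natCast_nonneg j)
  P_mem m x y hx hy j hj := by
    rw [P_natCast_P_of_forall_lt fun i hi ↦ hx i (hi.trans hj), hx j hj, hy j hj, map_zero,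
      map_zero, LinearMap.zero_apply, add_zero]

theorem D_P_smul_of_forall_lt {v y : V} {j : ℕ} (h : ∀ i < j, W.D (W.P i v y) = 0) (q : ℂ[X]) :
    ∀ i ≤ j, W.D (W.P i v (q • y)) = q • W.D (W.P i v y) := by
  induction q using Polynomial.induction_on' with
  | add p q hp hq =>
    intro i hi
    rw [add_smul, map_add, map_add, hp i hi, hq i hi, add_smul]
  | monomial n c =>
    intro i
    rw [← smul_X_eq_monomial, smul_assoc, map_smul, LinearMap.map_smul, smul_assoc]
    suffices i ≤ j → W.D (W.P i v ((X ^ n : ℂ[X]) • y)) = (X ^ n : ℂ[X]) • W.D (W.P i v y) from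
      fun hi ↦ congrArg (c • ·) (this hi)
    induction n generalizing i with
    | zero => simp
    | succ n ih =>
      intro hi
      rw [pow_succ', mul_smul, mul_smul, ← ih i hi, W.X_smul, W.X_smul]
      cases i with
      | zero => rw [Nat.cast_zero, P_zero_D]
      | succ i =>
        rw [P_succ_D, map_add, LinearMap.map_smul, ih i (by lia), h i hi, smul_zero, smul_zero,
          add_zero]

end ModeKernel

section LeadingMode

variable {v : V} {n : ℕ} (hv : ∀ x, ∀ j < n, W.P j v x = 0)

/-- The mode `v_(n)` as a `ℂ[X]`-linear map, when all the modes `v_(j)` with `0 ≤ j < n` vanish. -/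
noncomputable def leadingMode : V →ₗ[ℂ[X]] V :=
  linearMapOfMapXSmul (W.P n v) fun x ↦ by
    rw [W.X_smul, P_natCast_D_of_forall_lt (hv x), W.X_smul]

theorem leadingMode_apply (x : V) : leadingMode hv x = W.P n v x := rfl

theorem isDerivation_leadingMode : W.IsDerivation (leadingMode hv) :=
  fun m x y ↦ P_natCast_P_of_forall_lt (hv x) m y

end LeadingMode

variable [Module.Finite ℂ[X] V]

theorem HasNoZeroDivisors.isNilpotent_P (hW : W.HasNoZeroDivisors) {v : V} (hvv : W.Commutes v v)
    {n : ℕ} (hv : ∀ x, ∀ j < n, W.P j v x = 0) : IsNilpotent (W.P n v) := by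
  obtain ⟨g, hg, aeval_g⟩ := exists_aeval_eq_zero (f := leadingMode hv) (E := W.P (n + 1 : ℕ) v)
    (Nat.cast_add_one_ne_zero n)
    (fun x ↦ by rw [W.X_smul, P_succ_D, W.X_smul, leadingMode_apply]) fun x ↦ hvv.P_P_comm _ _ _
  obtain ⟨d, hd⟩ := isNilpotent_of_aeval_eq_zero
    (fun w hw c ↦ (isDerivation_leadingMode hv).eigenvalue_eq_zero hW hw) hg aeval_g
  refine ⟨d, LinearMap.ext fun x ↦ ?_⟩
  rw [Module.End.pow_apply]
  exact (Module.End.pow_apply (leadingMode hv) d x).symm.trans (LinearMap.congr_fun hd x)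

-- The ranks of the mode kernels stabilise; from then on the modes of `v` take torsion values.
theorem HasNoZeroDivisors.exists_forall_mem_modeKernel_commutes (hW : W.HasNoZeroDivisors) {v : V}
    (hvv : W.Commutes v v) (hDv : W.D v ≠ 0) : ∃ n, ∀ y ∈ W.modeKernel v n, W.Commutes v y := by
  obtain ⟨n, hn⟩ : ∃ n, ∀ m,
      Module.finrank ℂ[X] (W.modeKernel v n) ≤ Module.finrank ℂ[X] (W.modeKernel v m) :=
    ⟨_, fun m ↦ Function.argmin_le (fun n ↦ Module.finrank ℂ[X] (W.modeKernel v n)) m⟩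
  refine ⟨n, fun y hy ↦ ?_⟩
  have D_P_eq_zero (j : ℕ) : W.D (W.P j v y) = 0 := by
    induction j using Nat.strong_induction_on with
    | _ j ih =>
      by_cases hj : j < n
      · rw [hy j hj, map_zero]
      obtain ⟨h, h0, hh⟩ := exists_smul_mem_of_finrank_le
        (modeKernel_antitone v (by lia : n ≤ j + 1)) (hn (j + 1)) hy
      have smul_D_P := D_P_smul_of_forall_lt ih h j le_rfl
      rw [hh j (Nat.lt_succ_self j), map_zero] at smul_D_P
      exact hW.D_eq_zero_of_D_D_eq_zero (hW.D_eq_zero_of_smul_eq_zero h0 smul_D_P.symm)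
  exact hW.commutes_of_forall_commutes_P hvv hDv fun j ↦
    (commutes_of_D_eq_zero (D_P_eq_zero j) v).symm

theorem HasNoZeroDivisors.commutes_of_mem_modeKernel (hW : W.HasNoZeroDivisors) {v : V}
    (hvv : W.Commutes v v) (hDv : W.D v ≠ 0) {n : ℕ}
    (h : ∀ y ∈ W.modeKernel v (n + 1), W.Commutes v y) :
    ∀ y ∈ W.modeKernel v n, W.Commutes v y := by
  have hS := isSubalgebra_modeKernel (W := W) v n
  let v' : W.modeKernel v n := ⟨v, fun j _ ↦ hvv j⟩
  have commutes_of_pow (k : ℕ) (y : W.modeKernel v n) :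
      ((restrict hS).P n v' ^ k) y = 0 → W.Commutes v y := by
    induction k generalizing y with
    | zero => exact fun hy j ↦ by rw [show y = 0 from hy, ZeroMemClass.coe_zero, map_zero]
    | succ k ih =>
      intro hy
      have commutes_P : W.Commutes v (W.P n v y) := ih ((restrict hS).P n v' y) hy
      refine hW.commutes_of_forall_commutes_P hvv hDv fun j ↦ h _ fun i hi ↦ ?_
      rw [hvv.P_P_comm]
      rcases (Nat.lt_succ_iff_lt_or_eq.1 hi) with hin | rfl
      · rw [y.2 i hin, map_zero]
      · exact commutes_P j
  obtain ⟨d, hd⟩ := (hasNoZeroDivisors_restrict hS hW).isNilpotent_P (v := v')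
    (fun j ↦ Subtype.ext (hvv j)) fun x j hj ↦ Subtype.ext (x.2 j hj)
  exact fun y hy ↦ commutes_of_pow d ⟨y, hy⟩ (LinearMap.congr_fun hd _)

theorem HasNoZeroDivisors.commutes_of_commutes_self (hW : W.HasNoZeroDivisors) {v : V}
    (hvv : W.Commutes v v) (hDv : W.D v ≠ 0) (x y : V) : W.Commutes x y := by
  obtain ⟨n, hn⟩ := hW.exists_forall_mem_modeKernel_commutes hvv hDv
  have forall_commutes (y : V) : W.Commutes v y := by
    induction n with
    | zero => exact hn y fun j hj ↦ absurd hj j.not_lt_zero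
    | succ n ih => exact ih (hW.commutes_of_mem_modeKernel hvv hDv hn)
  exact hW.commutes_of_forall_commutes_P hvv hDv fun _ ↦ forall_commutes _

end VertexAlgebra

section SpectralTranslation

theorem exists_irreducible_map_apply_eq_zero {B R M : Type*} [CommRing B] [IsDomain B]
    [WfDvdMonoid B] [Semiring R] [AddCommMonoid M] [Module R M] (φ : B →+* Module.End R M) {b : B}
    (hb : b ≠ 0) {w : M} (hw : w ≠ 0) (h : φ b w = 0) :
    ∃ q, Irreducible q ∧ q ∣ b ∧ ∃ a, φ a w ≠ 0 ∧ φ q (φ a w) = 0 := by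
  induction b using WfDvdMonoid.induction_on_irreducible with
  | zero => exact absurd rfl hb
  | unit u hu =>
    exact absurd (((Module.End.isUnit_iff _).1 (hu.map φ)).1 (h.trans (map_zero _).symm)) hw
  | mul a q ha hq ih =>
    by_cases haw : φ a w = 0
    · obtain ⟨q', hq', hdvd, a', ha'⟩ := ih ha haw
      exact ⟨q', hq', hdvd.mul_left q, a', ha'⟩
    · exact ⟨q, hq, dvd_mul_right q a, a, haw, by rwa [← Module.End.mul_apply, ← map_mul]⟩

theorem exists_mul_add_mul_eq_C_of_not_dvd {R : Type*} [CommRing R] [IsDomain R]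
    [IsGCDMonoid R] {q p : R[X]} (hq : Irreducible q) (hdeg : q.natDegree ≠ 0)
    (h : ¬ q ∣ p) : ∃ a b : R[X], ∃ s ≠ 0, a * q + b * p = C s := by
  let F := FractionRing R
  have hprim := hq.isPrimitive hdeg
  have irreducible_map := (hprim.irreducible_iff_irreducible_map_fraction_map (K := F)).1 hq
  obtain ⟨a, b, hab⟩ := (EuclideanDomain.dvd_or_coprime _ (p.map (algebraMap R F))
    irreducible_map).resolve_left fun hd ↦ h (hprim.dvd_of_fraction_map_dvd_fraction_map hd)
  obtain ⟨s, hs, map_a⟩ := IsLocalization.integerNormalization_spec (nonZeroDivisors R) a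
  obtain ⟨t, ht, map_b⟩ := IsLocalization.integerNormalization_spec (nonZeroDivisors R) b
  refine ⟨C t * IsLocalization.integerNormalization (nonZeroDivisors R) a,
    C s * IsLocalization.integerNormalization (nonZeroDivisors R) b, s * t,
    nonZeroDivisors.ne_zero (mul_mem hs ht), map_injective _ (IsFractionRing.injective R F) ?_⟩
  simp only [Polynomial.map_add, Polynomial.map_mul, map_a, map_b, map_C, map_mul,
    ← algebraMap_smul F (_ : R) (_ : F[X]), smul_eq_C_mul]
  linear_combination (C (algebraMap R F t) * C (algebraMap R F s)) * hab

theorem dvd_of_aeval_apply_eq_zero {R M : Type*} [CommRing R] [IsDomain R] [IsGCDMonoid R]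
    [AddCommGroup M] [Module R M] [Module.IsTorsionFree R M] {f : Module.End R M} {q p : R[X]}
    (hq : Irreducible q) {w : M} (hw : w ≠ 0) (hqw : aeval f q w = 0) (hpw : aeval f p w = 0) :
    q ∣ p := by
  by_contra hdvd
  have hdeg : q.natDegree ≠ 0 := by
    intro hdeg
    obtain ⟨c, rfl⟩ := natDegree_eq_zero.1 hdeg
    rw [aeval_C, Module.algebraMap_end_apply] at hqw
    exact hq.ne_zero (by rw [(smul_eq_zero.1 hqw).resolve_right hw, C_0])
  obtain ⟨a, b, s, hs, hab⟩ := exists_mul_add_mul_eq_C_of_not_dvd hq hdeg hdvd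
  have smul_eq := congrArg (fun r ↦ aeval f r w) hab
  simp only [map_add, map_mul, LinearMap.add_apply, Module.End.mul_apply, hqw, hpw, map_zero,
    add_zero, aeval_C, Module.algebraMap_end_apply] at smul_eq
  exact (smul_ne_zero hs hw) smul_eq.symm

variable {K : Type*} [Field K]

theorem natDegree_eq_zero_of_taylor_eq_C_mul [IsAlgClosed K] [CharZero K] {δ u : K} (hδ : δ ≠ 0)
    {p : K[X]} (h : taylor δ p = C u * p) : p.natDegree = 0 := by
  by_contra hdeg
  have hp : p ≠ 0 := fun hp ↦ hdeg (by rw [hp, natDegree_zero])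
  obtain ⟨a, ha⟩ := IsAlgClosed.exists_root p fun h0 ↦ hdeg (natDegree_eq_of_degree_eq_some h0)
  have isRoot_add (n : ℕ) : p.IsRoot (a + n * δ) := by
    induction n with
    | zero => simpa using ha
    | succ n ih =>
      have eval_taylor := congrArg (eval (a + n * δ)) h
      rw [taylor_eval, eval_mul, ih.eq_zero, mul_zero] at eval_taylor
      rwa [Nat.cast_succ, add_one_mul, ← add_assoc]
  exact hp (eq_zero_of_infinite_isRoot p
    (Set.infinite_of_injective_forall_mem (fun m n hmn ↦ by simpa [hδ] using hmn) isRoot_add))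

/-- The substitution `T ↦ T + μ`, `X ↦ X - β` on polynomials in `X` over `K[T]`. It describes how a
polynomial relation satisfied by an endomorphism transforms under a map shifting `T` by `μ`. -/
noncomputable def shiftEquiv (μ β : K) : K[X][X] ≃+* K[X][X] :=
  (mapEquiv (taylorEquiv μ).toRingEquiv).trans (taylorEquiv (C (-β))).toRingEquiv

theorem shiftEquiv_apply (μ β : K) (q : K[X][X]) :
    shiftEquiv μ β q = taylor (C (-β)) (q.map (taylorAlgHom μ : K[X] →+* K[X])) :=
  rfl

theorem shiftEquiv_C (μ β : K) (a : K[X]) : shiftEquiv μ β (C a) = C (taylor μ a) := by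
  rw [shiftEquiv_apply, map_C, taylor_C]
  rfl

theorem shiftEquiv_X (μ β : K) : shiftEquiv μ β X = X - C (C β) := by
  rw [shiftEquiv_apply, map_X, taylor_X, C_neg, C_neg, sub_eq_add_neg]

theorem shiftEquiv_shiftEquiv (μ β μ' β' : K) (q : K[X][X]) :
    shiftEquiv μ β (shiftEquiv μ' β' q) = shiftEquiv (μ + μ') (β + β') q := by
  induction q using Polynomial.induction_on' with
  | add p q hp hq => simp only [map_add, hp, hq]
  | monomial n a =>
    simp only [← C_mul_X_pow_eq_monomial, map_mul, map_pow, shiftEquiv_C, shiftEquiv_X, map_sub,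
      taylor_taylor, taylor_C, C_add]
    congr 2
    ring

theorem taylor_shiftEquiv {δ : K} (hδ : δ ≠ 0) (ε : K) (q : K[X][X]) :
    taylor (C (-ε / δ) * X) (shiftEquiv δ ε q) =
      (taylor (C (-ε / δ) * X) q).map (taylorAlgHom δ : K[X] →+* K[X]) := by
  set t : K[X] := C (-ε / δ) * X
  have taylor_t : taylor δ t = t + C (-ε) := by
    rw [taylor_mul, taylor_C, taylor_X, mul_add, ← C_mul, div_mul_cancel₀ _ hδ]
  induction q using Polynomial.induction_on' with
  | add p q hp hq => simp only [map_add, Polynomial.map_add, hp, hq]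
  | monomial n a =>
    simp only [← C_mul_X_pow_eq_monomial, map_mul, map_pow, shiftEquiv_C, shiftEquiv_X, map_sub,
      taylor_mul t, taylor_pow, taylor_C, taylor_X, Polynomial.map_mul, Polynomial.map_pow,
      Polynomial.map_add, map_C, map_X, RingHom.coe_coe, taylorAlgHom_apply, taylor_t, C_add, C_neg]
    congr 2
    ring

theorem exists_map_C_eq_taylor_of_associated [IsAlgClosed K] [CharZero K] {q : K[X][X]} {δ ε : K}
    (hδ : δ ≠ 0) (h : Associated q (shiftEquiv δ ε q)) :
    ∃ r : K[X], r.map C = taylor (C (-ε / δ) * X) q := by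
  obtain ⟨u, hu⟩ := h
  obtain ⟨u₁, hu₁, hCu₁⟩ := Polynomial.isUnit_iff.1 u.isUnit
  obtain ⟨u₀, -, rfl⟩ := Polynomial.isUnit_iff.1 hu₁
  -- The coefficients are `δ`-periodic up to a scalar, hence constant.
  refine (mem_lifts _).1 ((lifts_iff_coeff_lifts _).2 fun i ↦ natDegree_eq_zero.1
    (natDegree_eq_zero_of_taylor_eq_C_mul hδ (u := u₀) ?_))
  have coeff_shift := congrArg (coeff · i) (taylor_shiftEquiv hδ ε q)
  simp only [← hu, ← hCu₁, taylor_mul, taylor_C, coeff_map, coeff_mul_C] at coeff_shift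
  exact coeff_shift.symm.trans (mul_comm _ _)

variable {M N : Type*} [AddCommGroup M] [Module K M] [Module K[X] M] [IsScalarTower K K[X] M]
  [AddCommGroup N] [Module K N] [Module K[X] N] [IsScalarTower K K[X] N]

theorem exists_eigenvector_of_aeval_apply_eq_zero [IsAlgClosed K] {f : Module.End K[X] M} {g : K[X]}
    (hg : g ≠ 0) {x : M} (hx : x ≠ 0) (h : aeval f g x = 0) : ∃ c : K, ∃ w ≠ 0, f w = c • w := by
  obtain ⟨q, hq, -, a, hw, hqw⟩ :=
    exists_irreducible_map_apply_eq_zero (aeval f : K[X] →ₐ[K] _).toRingHom hg hx h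
  have hdeg := IsAlgClosed.degree_eq_one_of_irreducible K hq
  have hlead : q.coeff 1 ≠ 0 := coeff_ne_zero_of_eq_degree hdeg
  refine ⟨-(q.coeff 1)⁻¹ * q.coeff 0, _, hw, ?_⟩
  generalize (aeval f : K[X] →ₐ[K] _).toRingHom a x = w at hqw
  rw [eq_X_add_C_of_degree_le_one hdeg.le] at hqw
  change aeval f _ w = 0 at hqw
  rw [map_add, map_mul, aeval_X, aeval_C, aeval_C, LinearMap.add_apply, Module.End.mul_apply,
    Module.algebraMap_end_apply, Module.algebraMap_end_apply, add_eq_zero_iff_eq_neg] at hqw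
  rw [neg_mul, neg_smul, mul_smul, ← smul_neg, ← hqw, inv_smul_smul₀ hlead]

theorem exists_eigenvector_of_associated [IsAlgClosed K] [CharZero K] {f : Module.End K[X] M}
    {q : K[X][X]} (hq : q ≠ 0) {δ ε : K} (hδ : δ ≠ 0) (h : Associated q (shiftEquiv δ ε q)) {w : M}
    (hw : w ≠ 0) (hqw : aeval f q w = 0) :
    ∃ d c : K, ∃ w ≠ 0, f w = (C d * X) • w + c • w := by
  obtain ⟨r, hr⟩ := exists_map_C_eq_taylor_of_associated hδ h
  set t : K[X] := C (-ε / δ) * X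
  have hr0 : r ≠ 0 := by
    rintro rfl
    exact hq (taylor_injective t (by rw [← hr, Polynomial.map_zero, map_zero]))
  let g : Module.End K[X] M := f - algebraMap K[X] _ t
  have aeval_r : aeval g r = aeval f q := by
    rw [← aeval_map_algebraMap K[X] g r, algebraMap_eq, hr, taylor_apply, aeval_comp]
    congr 1
    simp [g]
  obtain ⟨c, w', hw', hgw'⟩ := exists_eigenvector_of_aeval_apply_eq_zero hr0 hw
    (by rw [aeval_r, hqw])
  exact ⟨-ε / δ, c, w', hw', by rw [← hgw']; exact (add_sub_cancel _ _).symm⟩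

theorem map_aeval_eq_aeval_shiftEquiv {f : Module.End K[X] M} {g : Module.End K[X] N}
    {φ : M →ₗ[K] N} {μ β : K} (hφ : ∀ m, φ ((X : K[X]) • m) = (X + C μ) • φ m)
    (hfg : ∀ m, φ (f m) = g (φ m) - β • φ m) (p : K[X][X]) (m : M) :
    φ (aeval f p m) = aeval g (shiftEquiv μ β p) (φ m) := by
  induction p using Polynomial.induction_on' generalizing m with
  | add p q hp hq => simp only [map_add, LinearMap.add_apply, hp, hq]
  | monomial n a =>
    simp only [← C_mul_X_pow_eq_monomial, map_mul, map_pow, shiftEquiv_C, shiftEquiv_X,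
      Module.End.mul_apply, aeval_C, aeval_X, Module.algebraMap_end_apply]
    rw [map_smul_of_map_X_smul_eq_X_add_C_smul φ hφ]
    congr 1
    induction n generalizing m with
    | zero => rfl
    | succ n ih =>
      rw [pow_succ, Module.End.mul_apply, ih, hfg, pow_succ, Module.End.mul_apply, aeval_sub,
        aeval_X, aeval_C, LinearMap.sub_apply, Module.algebraMap_end_apply, C_eq_algebraMap,
        algebraMap_smul]

theorem exists_factors_associated_shiftEquiv [Module.IsTorsionFree K[X] N]
    {f : Module.End K[X] M} {g : Module.End K[X] N} {φ : M →ₗ[K] N} {μ β : K}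
    (hφ : ∀ m, φ ((X : K[X]) • m) = (X + C μ) • φ m) (hfg : ∀ m, φ (f m) = g (φ m) - β • φ m)
    (hφ0 : φ ≠ 0) {p q : K[X][X]} (hp : p ≠ 0) (hq : q ≠ 0) (hpf : aeval f p = 0)
    (hqg : aeval g q = 0) :
    ∃ p' ∈ UniqueFactorizationMonoid.factors p, ∃ q' ∈ UniqueFactorizationMonoid.factors q,
      (∃ w ≠ 0, aeval g q' w = 0) ∧ Associated (shiftEquiv μ β p') q' := by
  obtain ⟨m, hm⟩ : ∃ m, φ m ≠ 0 := by
    by_contra! h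
    exact hφ0 (LinearMap.ext h)
  obtain ⟨q₀, hq₀, hq₀q, a, ha, hqa⟩ := exists_irreducible_map_apply_eq_zero
    (aeval g : K[X][X] →ₐ[K[X]] _).toRingHom hq hm (LinearMap.congr_fun hqg _)
  have dvd_shift : q₀ ∣ shiftEquiv μ β p := by
    refine dvd_of_aeval_apply_eq_zero (f := g) hq₀ ha hqa ?_
    change aeval g _ (aeval g a (φ m)) = 0
    rw [← Module.End.mul_apply, ← map_mul, mul_comm, map_mul, Module.End.mul_apply,
      ← map_aeval_eq_aeval_shiftEquiv hφ hfg, hpf, LinearMap.zero_apply, map_zero, map_zero]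
  obtain ⟨q', hq', q₀_assoc⟩ := UniqueFactorizationMonoid.exists_mem_factors_of_dvd hq hq₀ hq₀q
  obtain ⟨p', hp', p'_assoc⟩ := UniqueFactorizationMonoid.exists_mem_factors_of_dvd hp
    ((MulEquiv.irreducible_iff (shiftEquiv μ β).symm).2 hq₀)
    ((map_dvd (shiftEquiv μ β).symm dvd_shift).trans (by rw [RingEquiv.symm_apply_apply]))
  refine ⟨p', hp', q', hq', ⟨_, ha, ?_⟩, ?_⟩
  · obtain ⟨u, rfl⟩ := q₀_assoc
    rw [mul_comm, map_mul, Module.End.mul_apply]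
    exact (congrArg _ hqa).trans (map_zero _)
  · have shift_assoc := p'_assoc.map (shiftEquiv μ β)
    rw [RingEquiv.apply_symm_apply] at shift_assoc
    exact shift_assoc.symm.trans q₀_assoc

/-- If infinitely many shifts of the spectral curve of `f` share a component with the spectral
curve of `g`, then some component of the latter is invariant under a shift, hence a line. -/
theorem exists_eigenvector_of_infinite_shifts [IsAlgClosed K] [CharZero K] [Module.Finite K[X] M]
    [Module.Finite K[X] N] [Module.IsTorsionFree K[X] N] {f : Module.End K[X] M}
    {g : Module.End K[X] N} {S : Set K} (hS : S.Infinite)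
    (h : ∀ μ ∈ S, ∃ (β : K) (φ : M →ₗ[K] N), φ ≠ 0 ∧
      (∀ m, φ ((X : K[X]) • m) = (X + C μ) • φ m) ∧ ∀ m, φ (f m) = g (φ m) - β • φ m) :
    ∃ d c : K, ∃ w ≠ 0, g w = (C d * X) • w + c • w := by
  classical
  obtain ⟨p, hp, hpf⟩ := LinearMap.exists_monic_and_aeval_eq_zero K[X] f
  obtain ⟨q, hq, hqg⟩ := LinearMap.exists_monic_and_aeval_eq_zero K[X] g
  have exists_factors (μ : S) : ∃ (β : K) (p' : (UniqueFactorizationMonoid.factors p).toFinset)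
      (q' : (UniqueFactorizationMonoid.factors q).toFinset),
      (∃ w ≠ 0, aeval g (q' : K[X][X]) w = 0) ∧
        Associated (shiftEquiv (μ : K) β p') (q' : K[X][X]) := by
    obtain ⟨β, φ, hφ0, hφ, hfg⟩ := h μ μ.2
    obtain ⟨p', hp', q', hq', hpq⟩ := exists_factors_associated_shiftEquiv hφ hfg hφ0 hp.ne_zero
      hq.ne_zero hpf hqg
    exact ⟨β, ⟨p', Multiset.mem_toFinset.2 hp'⟩, ⟨q', Multiset.mem_toFinset.2 hq'⟩, hpq⟩
  choose β p' q' hw hassoc using exists_factors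
  have := hS.to_subtype
  obtain ⟨μ, ν, hne, heq⟩ := Finite.exists_ne_map_eq_of_infinite fun μ ↦ (p' μ, q' μ)
  obtain ⟨hp', hq'⟩ := Prod.mk.inj heq
  obtain ⟨w, hw0, hqw⟩ := hw μ
  refine exists_eigenvector_of_associated (δ := ν - μ) (ε := β ν - β μ)
    (UniqueFactorizationMonoid.irreducible_of_factor _
      (Multiset.mem_toFinset.1 (q' μ).2)).ne_zero
    (sub_ne_zero.2 fun h ↦ hne (Subtype.ext h.symm)) ?_ hw0 hqw
  have shift_assoc := (hassoc μ).map (shiftEquiv ((ν : K) - μ) (β ν - β μ))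
  rw [shiftEquiv_shiftEquiv, sub_add_cancel, sub_add_cancel, hp'] at shift_assoc
  exact (hq' ▸ (hassoc ν).symm).trans shift_assoc

end SpectralTranslation

section ScalarAction

variable {K M : Type*} [CommRing K] [AddCommGroup M] [Module K M] [Module K[X] M]
  [IsScalarTower K K[X] M]

theorem smul_eq_eval_smul {a : K} {m : M} (h : (X : K[X]) • m = a • m) (q : K[X]) :
    q • m = q.eval a • m := by
  obtain ⟨r, hr⟩ := X_sub_C_dvd_sub_C_eval (a := a) (p := q)
  have X_sub_C_smul : (X - C a) • m = 0 := by
    rw [sub_smul, C_eq_algebraMap, algebraMap_smul, h, sub_self]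
  rw [← sub_eq_zero, ← algebraMap_smul K[X] (q.eval a) m, ← C_eq_algebraMap, ← sub_smul, hr,
    mul_comm, mul_smul, X_sub_C_smul, smul_zero]

theorem finite_of_forall_X_smul_eq [Module.Finite K[X] M] {a : K}
    (h : ∀ m : M, (X : K[X]) • m = a • m) : Module.Finite K M := by
  obtain ⟨s, hs⟩ := Module.Finite.fg_top (R := K[X]) (M := M)
  refine ⟨s, eq_top_iff.2 fun m _ ↦ ?_⟩
  have hm : m ∈ Submodule.span K[X] (s : Set M) := hs ▸ Submodule.mem_top
  induction hm using Submodule.span_induction with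
  | mem x hx => exact Submodule.subset_span hx
  | zero => exact zero_mem _
  | add x y _ _ hx hy => exact add_mem (hx trivial) (hy trivial)
  | smul q x _ hx => exact smul_eq_eval_smul (h x) q ▸ Submodule.smul_mem _ _ (hx trivial)

end ScalarAction

namespace VertexAlgebra

variable {V : Type*} [AddCommGroup V] [Module ℂ V] {W : VertexAlgebra V}

section LambdaBracket

theorem finite_support_lambdaBracket (μ : ℂ) (x y : V) :
    (Function.support fun j : ℕ ↦ (μ ^ j / (j.factorial : ℂ)) • W.P j x y).Finite := by
  obtain ⟨N, hN⟩ := W.field_ax x y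
  refine (Set.finite_Iio N).subset fun j hj ↦ Set.mem_Iio.2 (not_le.1 fun h ↦ hj ?_)
  simp only [hN j h, smul_zero]

variable (W) in
/-- The `λ`-bracket `[x_λ y] = ∑ j, λ^j / j! • x_(j) y` evaluated at the complex number `λ = μ`. -/
noncomputable def lambdaBracket (μ : ℂ) : V →ₗ[ℂ] V →ₗ[ℂ] V :=
  LinearMap.mk₂ ℂ (fun x y ↦ ∑ᶠ j : ℕ, (μ ^ j / (j.factorial : ℂ)) • W.P j x y)
    (fun x y z ↦ by
      simp only [map_add, LinearMap.add_apply, smul_add]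
      exact finsum_add_distrib (finite_support_lambdaBracket μ x z)
        (finite_support_lambdaBracket μ y z))
    (fun c x y ↦ by
      simp only [map_smul, LinearMap.smul_apply, smul_comm _ c]
      exact (smul_finsum c _).symm)
    (fun x y z ↦ by
      simp only [map_add, smul_add]
      exact finsum_add_distrib (finite_support_lambdaBracket μ x y)
        (finite_support_lambdaBracket μ x z))
    fun c x y ↦ by
      simp only [map_smul, smul_comm _ c]
      exact (smul_finsum c _).symm

theorem lambdaBracket_apply (μ : ℂ) (x y : V) :
    W.lambdaBracket μ x y = ∑ᶠ j : ℕ, (μ ^ j / (j.factorial : ℂ)) • W.P j x y := rfl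

theorem lambdaBracket_eq_sum {N : ℕ} {x y : V} (hN : ∀ j : ℕ, N ≤ j → W.P j x y = 0) (μ : ℂ) :
    W.lambdaBracket μ x y = ∑ j ∈ range N, (μ ^ j / (j.factorial : ℂ)) • W.P j x y := by
  refine finsum_eq_sum_of_support_subset _ fun j hj ↦ ?_
  refine mem_coe.2 (mem_range.2 (not_le.1 fun h ↦ hj ?_))
  simp only [hN j h, smul_zero]

theorem lambdaBracket_D_left (μ : ℂ) (x y : V) :
    W.lambdaBracket μ (W.D x) y = -μ • W.lambdaBracket μ x y := by
  obtain ⟨N, hN⟩ := W.field_ax x y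
  have P_succ_D_left (j : ℕ) : W.P (j + 1 : ℕ) (W.D x) y = -(j + 1 : ℂ) • W.P j x y := by
    simp [W.transl_inv]
  have hN' (j : ℕ) (hj : N + 1 ≤ j) : W.P j (W.D x) y = 0 := by
    obtain ⟨i, rfl⟩ := Nat.exists_eq_add_of_le' (Nat.one_le_of_lt hj)
    rw [P_succ_D_left, hN i (by lia), smul_zero]
  rw [lambdaBracket_eq_sum hN, lambdaBracket_eq_sum hN', sum_range_succ', smul_sum, W.transl_inv]
  simp only [P_succ_D_left, Nat.cast_zero, Int.cast_zero, neg_zero, zero_smul, smul_zero, add_zero]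
  refine sum_congr rfl fun j _ ↦ ?_
  rw [smul_smul, smul_smul, Nat.factorial_succ]
  congr 1
  have hj : (j + 1 : ℂ) ≠ 0 := Nat.cast_add_one_ne_zero j
  push_cast
  field_simp
  ring

theorem map_lambdaBracket (f : V →ₗ[ℂ] V)
    (hf : ∀ (n : ℤ) (x y : V), f (W.P n x y) = W.P n (f x) y + W.P n x (f y)) (μ : ℂ) (x y : V) :
    f (W.lambdaBracket μ x y) = W.lambdaBracket μ (f x) y + W.lambdaBracket μ x (f y) := by
  simp only [lambdaBracket_apply]
  rw [← finsum_add_distrib (finite_support_lambdaBracket μ (f x) y)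
      (finite_support_lambdaBracket μ x (f y)), ← LinearMap.toAddMonoidHom_coe,
    AddMonoidHom.map_finsum _ (finite_support_lambdaBracket μ x y)]
  refine finsum_congr fun j ↦ ?_
  rw [LinearMap.toAddMonoidHom_coe, map_smul, hf, smul_add]

theorem lambdaBracket_D (μ : ℂ) (x y : V) :
    W.lambdaBracket μ x (W.D y) = W.D (W.lambdaBracket μ x y) + μ • W.lambdaBracket μ x y := by
  rw [map_lambdaBracket W.D W.D_deriv, lambdaBracket_D_left, neg_smul]
  abel

theorem infinite_setOf_D_lambdaBracket_ne_zero {x y : V} {j : ℕ} (hj : W.D (W.P j x y) ≠ 0) :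
    {μ : ℂ | W.D (W.lambdaBracket μ x y) ≠ 0}.Infinite := by
  obtain ⟨N, hN⟩ := W.field_ax x y
  obtain ⟨l, hl⟩ : ∃ l : Module.Dual ℂ V, l (W.D (W.P j x y)) ≠ 0 := by
    by_contra! h
    exact hj ((Module.forall_dual_apply_eq_zero_iff ℂ _).1 h)
  let p : ℂ[X] := ∑ i ∈ range N, monomial i (l (W.D (W.P i x y)) / (i.factorial : ℂ))
  have p_ne_zero : p ≠ 0 := by
    intro hp
    have coeff_eq := congrArg (coeff · j) hp
    have hjN : j < N := not_le.1 fun h ↦ hj (by rw [hN j h, map_zero])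
    simp only [p, finsetSum_coeff, coeff_monomial, coeff_zero] at coeff_eq
    rw [sum_ite_eq' (range N) j, if_pos (mem_range.2 hjN)] at coeff_eq
    exact div_ne_zero hl (Nat.cast_ne_zero.2 j.factorial_ne_zero) coeff_eq
  have eval_p (μ : ℂ) : p.eval μ = l (W.D (W.lambdaBracket μ x y)) := by
    simp only [p, lambdaBracket_eq_sum hN, map_sum, eval_finsetSum, eval_monomial, map_smul,
      smul_eq_mul]
    exact sum_congr rfl fun i _ ↦ by ring
  refine fun hfin ↦ p_ne_zero (eq_zero_of_infinite_isRoot p (hfin.infinite_compl.mono ?_))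
  intro μ hμ
  rw [Set.mem_ofPred_eq, IsRoot, eval_p, not_not.1 hμ, map_zero]

end LambdaBracket

section Derivation

theorem exists_P_ne_zero_forall_lt_P_eq_zero (h : ∃ x y, ¬ W.Commutes x y) :
    ∃ k : ℕ, (∃ x y, W.P k x y ≠ 0) ∧ ∀ j < k, ∀ x y, W.P j x y = 0 := by
  classical
  have exists_P_ne_zero : ∃ k : ℕ, ∃ x y, W.P k x y ≠ 0 := by
    obtain ⟨x, y, hxy⟩ := h
    obtain ⟨k, hk⟩ := not_forall.1 hxy
    exact ⟨k, x, y, hk⟩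
  refine ⟨Nat.find exists_P_ne_zero, Nat.find_spec exists_P_ne_zero, fun j hj x y ↦ ?_⟩
  by_contra hne
  exact Nat.find_min exists_P_ne_zero hj ⟨x, y, hne⟩

variable [Module ℂ[X] V]

theorem IsDerivation.isSubalgebra_ker {f : V →ₗ[ℂ[X]] V} (hf : W.IsDerivation f)
    (hvac : f W.vac = 0) : W.IsSubalgebra (LinearMap.ker f) where
  vac_mem := hvac
  P_mem n x y hx hy := by
    rw [LinearMap.mem_ker] at hx hy ⊢
    rw [hf, hx, hy, map_zero, map_zero, LinearMap.zero_apply, add_zero]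

section

variable [IsScalarTower ℂ ℂ[X] V]

theorem IsDerivation.map_lambdaBracket {f : V →ₗ[ℂ[X]] V} (hf : W.IsDerivation f) (μ : ℂ)
    (x y : V) :
    f (W.lambdaBracket μ x y) = W.lambdaBracket μ (f x) y + W.lambdaBracket μ x (f y) :=
  VertexAlgebra.map_lambdaBracket (f.restrictScalars ℂ) hf μ x y

theorem IsDerivation.apply_eq_zero_of_D_sub_smul_eq_zero [Module.Finite ℂ[X] V]
    {f : V →ₗ[ℂ[X]] V} (hf : W.IsDerivation f) (hW : W.HasNoZeroDivisors)
    (hconst : ∀ e, W.D e = 0 → f e = 0) {c : ℂ} {w : V} (hw : W.D w ≠ 0)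
    (hfw : W.D (f w - c • w) = 0) : f w = 0 := by
  have hc : c = 0 := by
    by_contra hc
    refine hc (hf.eigenvalue_eq_zero hW (w := w + c⁻¹ • (f w - c • w)) (fun h0 ↦ hw ?_) ?_)
    · have hD := congrArg W.D h0
      rwa [map_add, map_smul, hfw, smul_zero, add_zero, map_zero] at hD
    · rw [map_add, LinearMap.map_smul_of_tower, hconst _ hfw, smul_zero, add_zero, smul_add,
        smul_inv_smul₀ hc]
      abel
  rw [hc, zero_smul, sub_zero] at hfw
  exact hf.apply_eq_zero_of_apply_apply_eq_zero hW (hconst _ hfw) hfw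

end

variable [W.IsTranslationModule]

variable (W) in
theorem map_D (f : V →ₗ[ℂ[X]] V) (x : V) : f (W.D x) = W.D (f x) := by
  rw [← W.X_smul, map_smul, W.X_smul]

variable [IsScalarTower ℂ ℂ[X] V]

variable (W) in
/-- The kernel of the translation operator. -/
noncomputable def constants : Submodule ℂ[X] V :=
  submoduleOfXStable (LinearMap.ker W.D) fun x hx ↦ by
    rw [W.X_smul, LinearMap.mem_ker.1 hx]
    exact zero_mem _

theorem mem_constants {x : V} : x ∈ W.constants ↔ W.D x = 0 := Iff.rfl

theorem constants_le_comap (f : V →ₗ[ℂ[X]] V) : W.constants ≤ W.constants.comap f := by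
  intro x hx
  rw [Submodule.mem_comap, mem_constants, ← W.map_D, mem_constants.1 hx, map_zero]

variable (W) in
/-- The elements `x` for which `[x_μ y]` is constant for all `y`. -/
noncomputable def lambdaKernel (μ : ℂ) : Submodule ℂ[X] V :=
  submoduleOfXStable (LinearMap.ker ((W.lambdaBracket μ).compr₂ W.D)) fun x hx ↦ by
    refine LinearMap.mem_ker.2 (LinearMap.ext fun y ↦ ?_)
    have hxy : W.D (W.lambdaBracket μ x y) = 0 := LinearMap.congr_fun hx y
    rw [LinearMap.compr₂_apply, W.X_smul, lambdaBracket_D_left, map_smul, hxy, smul_zero,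
      LinearMap.zero_apply]

theorem mem_lambdaKernel {μ : ℂ} {x : V} :
    x ∈ W.lambdaKernel μ ↔ ∀ y, W.D (W.lambdaBracket μ x y) = 0 :=
  LinearMap.ext_iff

theorem IsDerivation.lambdaKernel_le_comap {f : V →ₗ[ℂ[X]] V} (hf : W.IsDerivation f) (μ : ℂ) :
    W.lambdaKernel μ ≤ (W.lambdaKernel μ).comap f := by
  intro x hx
  rw [mem_lambdaKernel] at hx
  refine mem_lambdaKernel.2 fun y ↦ ?_
  rw [eq_sub_of_add_eq (hf.map_lambdaBracket μ x y).symm, map_sub, hx, sub_zero, ← W.map_D, hx,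
    map_zero]

theorem X_smul_quotient_lambdaKernel (μ : ℂ) (z : V ⧸ W.lambdaKernel μ) :
    (X : ℂ[X]) • z = -μ • z := by
  obtain ⟨z, rfl⟩ := (W.lambdaKernel μ).mkQ_surjective z
  rw [← map_smul, ← LinearMap.map_smul_of_tower, ← sub_eq_zero, ← map_sub, Submodule.mkQ_apply,
    Submodule.Quotient.mk_eq_zero, mem_lambdaKernel]
  intro y
  rw [map_sub, LinearMap.sub_apply, W.X_smul, lambdaBracket_D_left, LinearMap.map_smul₂, sub_self,
    map_zero]

theorem IsDerivation.sub_smul_lsmul_X {f : V →ₗ[ℂ[X]] V} (hf : W.IsDerivation f) (d : ℂ) :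
    W.IsDerivation (f - d • LinearMap.lsmul ℂ[X] V X) := by
  intro n x y
  simp only [LinearMap.sub_apply, LinearMap.smul_apply, LinearMap.lsmul_apply, W.X_smul, hf n x y,
    W.D_deriv, map_sub, map_smul]
  module

variable [Module.Finite ℂ[X] V]

theorem HasNoZeroDivisors.isTorsionFree_quotient_constants (hW : W.HasNoZeroDivisors) :
    Module.IsTorsionFree ℂ[X] (V ⧸ W.constants) := by
  refine .of_smul_eq_zero fun p z hz ↦ or_iff_not_imp_left.2 fun hp ↦ ?_
  obtain ⟨x, rfl⟩ := W.constants.mkQ_surjective z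
  rw [← map_smul, Submodule.mkQ_apply, Submodule.Quotient.mk_eq_zero, mem_constants, ← W.X_smul,
    smul_comm, W.X_smul] at hz
  rw [Submodule.mkQ_apply, Submodule.Quotient.mk_eq_zero, mem_constants]
  exact hW.D_eq_zero_of_D_D_eq_zero (hW.D_eq_zero_of_smul_eq_zero hp hz)

theorem IsDerivation.exists_eigenvector_mod_lambdaKernel {f : V →ₗ[ℂ[X]] V}
    (hf : W.IsDerivation f) {μ : ℂ} (hμ : W.lambdaKernel μ ≠ ⊤) :
    ∃ (β : ℂ) (x : V), x ∉ W.lambdaKernel μ ∧ f x - β • x ∈ W.lambdaKernel μ := by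
  let K := W.lambdaKernel μ
  have := finite_of_forall_X_smul_eq (X_smul_quotient_lambdaKernel (W := W) μ)
  have := Submodule.Quotient.nontrivial_iff.2 hμ
  obtain ⟨β, hβ⟩ := Module.End.exists_eigenvalue
    ((K.mapQ K f (hf.lambdaKernel_le_comap μ)).restrictScalars ℂ)
  obtain ⟨z, hz⟩ := hβ.exists_hasEigenvector
  obtain ⟨x, rfl⟩ := K.mkQ_surjective z
  refine ⟨β, x, fun hx ↦ hz.2 ((Submodule.Quotient.mk_eq_zero K).2 hx), ?_⟩
  have hfx : K.mkQ (f x) = β • K.mkQ x := hz.apply_eq_smul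
  rwa [← LinearMap.map_smul_of_tower, ← sub_eq_zero, ← map_sub, Submodule.mkQ_apply,
    Submodule.Quotient.mk_eq_zero] at hfx

theorem HasNoZeroDivisors.exists_D_P_ne_zero (hW : W.HasNoZeroDivisors)
    (h : ∃ x y, ¬ W.Commutes x y) : ∃ (x y : V) (j : ℕ), W.D (W.P j x y) ≠ 0 := by
  by_contra! D_P_eq_zero
  obtain ⟨k, ⟨x, y, hxy⟩, hk⟩ := exists_P_ne_zero_forall_lt_P_eq_zero h
  have hx (z : V) (j : ℕ) (hj : j < k) : W.P j x z = 0 := hk j hj x z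
  exact hxy ((isDerivation_leadingMode hx).apply_eq_zero_of_apply_apply_eq_zero hW
    ((commutes_of_D_eq_zero (D_P_eq_zero x y k) x).symm k) (D_P_eq_zero x y k))

-- If `x` is an eigenvector of `f` modulo the kernel of `[·_μ ·]`, then `[x_μ ·]` intertwines `f`
-- with itself up to translating `T` by `μ` and `f` by a scalar; `μ` takes infinitely many values.
theorem IsDerivation.exists_eigenvector_mod_constants {f : V →ₗ[ℂ[X]] V} (hf : W.IsDerivation f)
    (hW : W.HasNoZeroDivisors) (h : ∃ x y, ¬ W.Commutes x y) :
    ∃ (d c : ℂ) (w : V), W.D w ≠ 0 ∧ W.D (f w - d • W.D w - c • w) = 0 := by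
  let K := W.constants
  have mkQ_eq_zero_iff (x : V) : K.mkQ x = 0 ↔ W.D x = 0 := Submodule.Quotient.mk_eq_zero K
  have := hW.isTorsionFree_quotient_constants
  obtain ⟨x₀, y₀, j, hj⟩ := hW.exists_D_P_ne_zero h
  obtain ⟨d, c, z, hz, hfz⟩ := exists_eigenvector_of_infinite_shifts (f := f)
    (g := K.mapQ K f (constants_le_comap f)) (infinite_setOf_D_lambdaBracket_ne_zero hj)
    (by
      intro μ hμ
      obtain ⟨β, x, hx, hfx⟩ := hf.exists_eigenvector_mod_lambdaKernel
        fun htop ↦ hμ (mem_lambdaKernel.1 (htop ▸ Submodule.mem_top) y₀)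
      refine ⟨β, K.mkQ.restrictScalars ℂ ∘ₗ W.lambdaBracket μ x, ?_, fun y ↦ ?_, fun y ↦ ?_⟩
      · rw [mem_lambdaKernel] at hx
        exact fun h0 ↦ hx fun y ↦ (mkQ_eq_zero_iff _).1 (LinearMap.congr_fun h0 y)
      · change K.mkQ (W.lambdaBracket μ x _) = _ • K.mkQ (W.lambdaBracket μ x y)
        rw [W.X_smul, lambdaBracket_D, ← W.X_smul, map_add, add_smul, C_eq_algebraMap,
          algebraMap_smul, map_smul, LinearMap.map_smul_of_tower]
      · change K.mkQ (W.lambdaBracket μ x (f y)) =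
          K.mkQ (f (W.lambdaBracket μ x y)) - β • K.mkQ (W.lambdaBracket μ x y)
        have hfxy := mem_lambdaKernel.1 hfx y
        rw [← mkQ_eq_zero_iff, map_sub, LinearMap.sub_apply, LinearMap.map_smul₂, map_sub,
          LinearMap.map_smul_of_tower, sub_eq_zero] at hfxy
        rw [hf.map_lambdaBracket, map_add, hfxy, add_sub_cancel_left])
  obtain ⟨w, rfl⟩ := K.mkQ_surjective z
  refine ⟨d, c, w, fun hw ↦ hz ((mkQ_eq_zero_iff w).2 hw), ?_⟩
  have hfw : K.mkQ (f w) = (C d * X : ℂ[X]) • K.mkQ w + c • K.mkQ w := hfz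
  rw [← mkQ_eq_zero_iff, map_sub, map_sub, hfw, mul_smul, C_eq_algebraMap, algebraMap_smul,
    ← map_smul, W.X_smul, LinearMap.map_smul_of_tower, LinearMap.map_smul_of_tower]
  abel

end Derivation

section Minimal

variable [Module ℂ[X] V]

variable (W) in
/-- A noncommutative vertex algebra without zero divisors in which every subalgebra containing a
nonconstant element has full rank. -/
structure IsMinimalNoncommutative : Prop where
  hasNoZeroDivisors : W.HasNoZeroDivisors
  exists_not_commutes : ∃ x y, ¬ W.Commutes x y
  finrank_le (S : Submodule ℂ[X] V) : W.IsSubalgebra S → (∃ x ∈ S, W.D x ≠ 0) →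
    Module.finrank ℂ[X] V ≤ Module.finrank ℂ[X] S

variable [W.IsTranslationModule] [IsScalarTower ℂ ℂ[X] V] [Module.Finite ℂ[X] V]

theorem IsMinimalNoncommutative.exists_forall_apply_eq_smul_D (hW : W.IsMinimalNoncommutative)
    {f : V →ₗ[ℂ[X]] V} (hf : W.IsDerivation f) (hconst : ∀ e, W.D e = 0 → f e = 0) :
    ∃ d : ℂ, ∀ x, f x = d • W.D x := by
  obtain ⟨d, c, w, hw, hfw⟩ :=
    hf.exists_eigenvector_mod_constants hW.hasNoZeroDivisors hW.exists_not_commutes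
  let g : V →ₗ[ℂ[X]] V := f - d • LinearMap.lsmul ℂ[X] V X
  have g_apply (x : V) : g x = f x - d • W.D x := by simp [g, W.X_smul]
  have hg : W.IsDerivation g := hf.sub_smul_lsmul_X d
  have g_const (e : V) (he : W.D e = 0) : g e = 0 := by
    rw [g_apply, hconst e he, he, smul_zero, sub_zero]
  rw [← g_apply] at hfw
  have gw_eq_zero : g w = 0 := hg.apply_eq_zero_of_D_sub_smul_eq_zero
    hW.hasNoZeroDivisors g_const hw hfw
  have finrank_le := hW.finrank_le _ (hg.isSubalgebra_ker (g_const _ W.D_vac)) ⟨w, gw_eq_zero, hw⟩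
  refine ⟨d, fun x ↦ ?_⟩
  obtain ⟨p, hp, hpx⟩ := exists_smul_mem_of_finrank_le (N₁ := LinearMap.ker g) (N₂ := ⊤) le_top
    (by rwa [finrank_top]) (Submodule.mem_top (x := x))
  rw [LinearMap.mem_ker, map_smul] at hpx
  have D_gx := hW.hasNoZeroDivisors.D_eq_zero_of_smul_eq_zero hp hpx
  rw [← sub_eq_zero, ← g_apply]
  exact hg.apply_eq_zero_of_apply_apply_eq_zero hW.hasNoZeroDivisors (g_const _ D_gx) D_gx

end Minimal

end VertexAlgebra

theorem subsingleton_of_basis_of_forall_eq_smul_add_X_smul {R M ι : Type*} [CommRing R]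
    [Nontrivial R] [AddCommGroup M] [Module R[X] M] (b : Module.Basis ι R[X] M) {m₀ : M}
    (h : ∀ m, ∃ (d : R) (u : M), m = C d • m₀ + (X : R[X]) • u) : Subsingleton ι := by
  choose d u hdu using h
  have eval_repr (m : M) (i : ι) :
      (b.repr m i).eval 0 = d m * (b.repr m₀ i).eval 0 := by
    nth_rw 1 [hdu m]
    simp
  have eval_repr_self (i : ι) : 1 = d (b i) * (b.repr m₀ i).eval 0 := by
    simpa using eval_repr (b i) i
  refine ⟨fun i j ↦ by_contra fun hij ↦ one_ne_zero (α := R) ?_⟩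
  have d_mul_eq_zero : d (b j) * (b.repr m₀ i).eval 0 = 0 := by
    simpa [Ne.symm hij] using (eval_repr (b j) i).symm
  linear_combination (1 : R) * eval_repr_self j + d (b i) * (b.repr m₀ j).eval 0 * d_mul_eq_zero
    + d (b j) * (b.repr m₀ j).eval 0 * eval_repr_self i

namespace VertexAlgebra

variable {V : Type*} [AddCommGroup V] [Module ℂ V] {W : VertexAlgebra V}

section SkewSymmetry

variable (W) in
theorem exists_P_eq_swap_add_D_D_D (n : ℤ) (a b : V) : ∃ u, W.P n a b = (-1 : ℂ) ^ (n + 1) •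
    (W.P n b a - W.D (W.P (n + 1) b a) + (1 / 2 : ℂ) • W.D (W.D (W.P (n + 2) b a))
      + W.D (W.D (W.D u))) := by
  obtain ⟨N, hN⟩ := W.exists_forall_le_P_add_eq_zero n b a
  have neg_one_zpow (j : ℕ) : (-1 : ℂ) ^ (n + j + 1) = (-1) ^ (n + 1) * (-1) ^ j := by
    rw [add_right_comm, zpow_add₀ (by norm_num), zpow_natCast]
  refine ⟨∑ j ∈ range N, ((-1 : ℂ) ^ (j + 3) / ((j + 3).factorial : ℂ)) •
    (W.D ^ j) (W.P (n + (j + 3 : ℕ)) b a), ?_⟩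
  rw [W.P_eq_sum_swap (N := N + 3) fun j hj ↦ hN j (by lia), sum_range_succ', sum_range_succ',
    sum_range_succ']
  simp only [neg_one_zpow, mul_div_assoc, mul_smul, ← smul_sum, ← smul_add]
  have D_pow_add_three (j : ℕ) (x : V) : (W.D ^ (j + 3)) x = W.D (W.D (W.D ((W.D ^ j) x))) := by
    simp only [pow_succ', Module.End.mul_apply]
  simp only [map_sum, LinearMap.map_smul, add_assoc, Nat.reduceAdd, D_pow_add_three]
  congr 1
  rw [pow_zero, pow_zero, pow_one, pow_one, pow_two W.D, Module.End.mul_apply, Module.End.one_apply,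
    Nat.factorial_zero, Nat.factorial_one, Nat.factorial_two]
  push_cast
  rw [add_zero]
  module

theorem P_succ_P_self_of_forall_le {n : ℕ} {L : V} (hn : ∀ j ≤ n, ∀ x y, W.P j x y = 0)
    (hL : ∀ y, W.P (n + 1) L y = W.D y) (y : V) :
    W.P (n + 1) (W.P (n + 2) L L) y = ((n + 2) * (n + 3) : ℂ) • W.D y := by
  have hcomm := W.P_natCast_P L L (n + 2) (n + 1) y
  rw [hL, sum_range_succ, sum_range_succ, sum_eq_zero fun j hj ↦ by
    rw [hn j (by simpa [Nat.lt_succ_iff] using hj), map_zero, LinearMap.zero_apply, smul_zero],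
    zero_add, P_D, hL] at hcomm
  push_cast at hcomm
  rw [hL, W.transl_inv, show (n + 2 : ℤ) - 1 = n + 1 by ring,
    show (n + 2 + (n + 1) - (n + 1) - 1 : ℤ) = n + 1 by ring,
    show (n + 2 + (n + 1) - (n + 2) : ℤ) = n + 1 by ring, hL, Nat.choose_succ_self_right,
    Nat.choose_self] at hcomm
  push_cast at hcomm
  linear_combination (norm := module) -hcomm

end SkewSymmetry

section

variable [Module ℂ[X] V] [W.IsTranslationModule] [IsScalarTower ℂ ℂ[X] V]

theorem P_zero_smul_left (q : ℂ[X]) (x y : V) : W.P 0 (q • x) y = q.eval 0 • W.P 0 x y := by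
  nth_rw 1 [← divX_mul_X_add q]
  rw [add_smul, mul_comm, mul_smul, W.X_smul, C_eq_algebraMap, algebraMap_smul, map_add,
    LinearMap.add_apply, W.transl_inv, LinearMap.map_smul₂, coeff_zero_eq_eval_zero, Int.cast_zero,
    neg_zero, zero_smul, zero_add]

variable [Module.Finite ℂ[X] V]

theorem HasNoZeroDivisors.D_eq_zero_of_P_succ_eq_D (hW : W.HasNoZeroDivisors) {n : ℕ} {L : V}
    (hn : ∀ j ≤ n, ∀ x y, W.P j x y = 0) (hL : ∀ y, W.P (n + 1) L y = W.D y) (y : V) :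
    W.D y = 0 := by
  obtain ⟨u, hu⟩ := W.exists_P_eq_swap_add_D_D_D n L L
  rw [hn n le_rfl, hL, eq_comm, smul_eq_zero_iff_right (zpow_ne_zero _ (by norm_num))] at hu
  have D_D_eq_zero : W.D (W.D (-L + (1 / 2 : ℂ) • W.P (n + 2) L L + W.D u)) = 0 := by
    simp only [map_add, map_neg, LinearMap.map_smul]
    linear_combination (norm := abel) hu
  have hP := commutes_of_D_eq_zero (hW.D_eq_zero_of_D_D_eq_zero D_D_eq_zero) y (n + 1)
  rw [Nat.cast_add, Nat.cast_one, map_add, map_add, map_neg, LinearMap.add_apply,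
    LinearMap.add_apply, LinearMap.neg_apply, LinearMap.map_smul₂, hL,
    P_succ_P_self_of_forall_le hn hL, W.transl_inv, add_sub_cancel_right, hn n le_rfl] at hP
  have smul_D : (((n : ℂ) + 2) * (n + 3) - 2) • W.D y = 0 := by
    linear_combination (norm := module) (2 : ℂ) • hP
  refine (smul_eq_zero.1 smul_D).resolve_left fun h ↦ ?_
  have : (n + 2) * (n + 3) = 2 := by exact_mod_cast sub_eq_zero.1 h
  nlinarith

namespace IsMinimalNoncommutative

theorem exists_forall_P_eq_smul_D (hW : W.IsMinimalNoncommutative) {n : ℕ} {v : V}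
    (hv : ∀ x, ∀ j < n, W.P j v x = 0) : ∃ d : ℂ, ∀ x, W.P n v x = d • W.D x :=
  hW.exists_forall_apply_eq_smul_D (isDerivation_leadingMode hv)
    fun _ he ↦ (commutes_of_D_eq_zero he v).symm n

theorem exists_D_ne_zero (hW : W.IsMinimalNoncommutative) : ∃ x, W.D x ≠ 0 :=
  let ⟨x, y, j, h⟩ := hW.hasNoZeroDivisors.exists_D_P_ne_zero hW.exists_not_commutes
  ⟨W.P j x y, h⟩

theorem exists_P_zero_eq_D (hW : W.IsMinimalNoncommutative) : ∃ L, ∀ y, W.P 0 L y = W.D y := by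
  obtain ⟨k, ⟨x, y, hxy⟩, hk⟩ := exists_P_ne_zero_forall_lt_P_eq_zero hW.exists_not_commutes
  obtain ⟨d, hd⟩ := hW.exists_forall_P_eq_smul_D fun z j hj ↦ hk j hj x z
  rw [hd] at hxy
  have hL (z : V) : W.P k (d⁻¹ • x) z = W.D z := by
    rw [LinearMap.map_smul₂, hd, inv_smul_smul₀ (left_ne_zero_of_smul hxy)]
  cases k with
  | zero => exact ⟨_, hL⟩
  | succ n =>
    refine absurd (hW.hasNoZeroDivisors.D_eq_zero_of_P_succ_eq_D (n := n) (L := d⁻¹ • x) ?_ ?_ y)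
      (right_ne_zero_of_smul hxy)
    · exact fun j hj ↦ hk j (Nat.lt_succ_of_le hj)
    · exact_mod_cast hL

theorem exists_eq_smul_add_D_add (hW : W.IsMinimalNoncommutative) {L : V}
    (hL : ∀ y, W.P 0 L y = W.D y) (x : V) :
    ∃ (d : ℂ) (u e : V), W.D e = 0 ∧ x = d • L + W.D u + e := by
  obtain ⟨d, hd⟩ := hW.exists_forall_P_eq_smul_D (n := 0) (v := x) (by simp)
  have P_zero (y : V) : W.P 0 (x - d • L) y = 0 := by
    rw [map_sub, LinearMap.sub_apply, LinearMap.map_smul₂, hL, ← hd, Nat.cast_zero, sub_self]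
  obtain ⟨d', hd'⟩ := hW.exists_forall_P_eq_smul_D (n := 1) (v := x - d • L) (by simpa using P_zero)
  let a := x - d • L + d' • W.D L
  have P_zero_a (y : V) : W.P 0 a y = 0 := by
    rw [map_add, LinearMap.add_apply, P_zero, LinearMap.map_smul₂, W.transl_inv, Int.cast_zero,
      neg_zero, zero_smul, smul_zero, add_zero]
  have P_one_a (y : V) : W.P 1 a y = 0 := by
    rw [Nat.cast_one] at hd'
    rw [map_add, LinearMap.add_apply, hd', LinearMap.map_smul₂, W.transl_inv, sub_self, hL]
    simp
  obtain ⟨u, hu⟩ := W.exists_P_eq_swap_add_D_D_D 0 L a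
  rw [hL, P_zero_a, zero_add, P_one_a, map_zero, sub_zero, zero_add, zero_add, zpow_one] at hu
  let z := (1 / 2 : ℂ) • W.P 2 a L + W.D u
  have D_eq_zero : W.D (a + W.D z) = 0 := by
    simp only [z, map_add, LinearMap.map_smul, hu]
    module
  refine ⟨d, -d' • L - z, a + W.D z, D_eq_zero, ?_⟩
  rw [map_sub, LinearMap.map_smul]
  module

theorem exists_coord (hW : W.IsMinimalNoncommutative) :
    ∃ (g : V) (c : V →ₗ[ℂ[X]] ℂ[X]), c g = 1 ∧ ∀ x, W.D (x - c x • g) = 0 := by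
  let K := W.constants
  have mkQ_eq_zero_iff (x : V) : K.mkQ x = 0 ↔ W.D x = 0 := Submodule.Quotient.mk_eq_zero K
  have := hW.hasNoZeroDivisors.isTorsionFree_quotient_constants
  obtain ⟨x, hx⟩ := hW.exists_D_ne_zero
  have : Nontrivial (V ⧸ K) := ⟨K.mkQ x, 0, fun h ↦ hx ((mkQ_eq_zero_iff x).1 h)⟩
  obtain ⟨n, b⟩ := Module.basisOfFiniteTypeTorsionFree' (R := ℂ[X]) (M := V ⧸ K)
  obtain ⟨L, hL⟩ := hW.exists_P_zero_eq_D
  have : Subsingleton (Fin n) := by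
    refine subsingleton_of_basis_of_forall_eq_smul_add_X_smul b (m₀ := K.mkQ L)
      (K.mkQ_surjective.forall.2 fun m ↦ ?_)
    obtain ⟨d, u, e, he, rfl⟩ := hW.exists_eq_smul_add_D_add hL m
    refine ⟨d, K.mkQ u, ?_⟩
    rw [map_add, (mkQ_eq_zero_iff e).2 he, add_zero, map_add, LinearMap.map_smul_of_tower,
      ← W.X_smul, map_smul, C_eq_algebraMap, algebraMap_smul]
  obtain ⟨i⟩ := b.index_nonempty
  obtain ⟨g, hg⟩ := K.mkQ_surjective (b i)
  refine ⟨g, b.coord i ∘ₗ K.mkQ, by simp [hg, -Submodule.mkQ_apply], fun y ↦ ?_⟩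
  have : Unique (Fin n) := uniqueOfSubsingleton i
  rw [← mkQ_eq_zero_iff, map_sub, map_smul, hg, sub_eq_zero]
  nth_rw 1 [← b.sum_repr (K.mkQ y)]
  simp [Subsingleton.elim default i]

end IsMinimalNoncommutative

variable (W) in
/-- `V` is free of rank one modulo constants with generator `L`, on which `L_(0)` acts as the
translation operator; `c` is the coordinate with respect to `L`. -/
structure IsConformalCoordinate (L : V) (c : V →ₗ[ℂ[X]] ℂ[X]) : Prop where
  P_zero (y : V) : W.P 0 L y = W.D y
  apply_self : c L = 1
  D_sub_smul (x : V) : W.D (x - c x • L) = 0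

theorem IsMinimalNoncommutative.exists_isConformalCoordinate (hW : W.IsMinimalNoncommutative) :
    ∃ L c, W.IsConformalCoordinate L c := by
  obtain ⟨g, c, hcg, hc⟩ := hW.exists_coord
  obtain ⟨d, hd⟩ := hW.exists_forall_P_eq_smul_D (n := 0) (v := g) (by simp)
  rw [Nat.cast_zero] at hd
  have d_ne_zero : d ≠ 0 := by
    rintro rfl
    obtain ⟨L, hL⟩ := hW.exists_P_zero_eq_D
    obtain ⟨y, hy⟩ := hW.exists_D_ne_zero
    have hLy := commutes_of_D_eq_zero (hc L) y 0
    rw [Nat.cast_zero, map_sub, LinearMap.sub_apply, P_zero_smul_left, hd, zero_smul, smul_zero,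
      sub_zero, hL] at hLy
    exact hy hLy
  refine ⟨d⁻¹ • g, d • c, fun y ↦ ?_, ?_, fun x ↦ ?_⟩
  · rw [LinearMap.map_smul₂, hd, inv_smul_smul₀ d_ne_zero]
  · rw [LinearMap.smul_apply, LinearMap.map_smul_of_tower, smul_inv_smul₀ d_ne_zero, hcg]
  · rw [LinearMap.smul_apply, smul_assoc, smul_comm, smul_inv_smul₀ d_ne_zero]
    exact hc x

end

end VertexAlgebra

theorem coeff_derivative_mul_X {R : Type*} [CommRing R] (p : R[X]) (m : ℕ) :
    (derivative p * X).coeff m = m * p.coeff m := by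
  cases m with
  | zero => simp
  | succ m => rw [coeff_mul_X, coeff_derivative, Nat.cast_succ, mul_comm]

/-- The coordinate form of a Lie conformal algebra of rank one: `r k f h` is the coordinate of the
product of `f(T)L` and `h(T)L` of index `k`, where `L` is a generator with `L_(0) = T`. The last
three fields are the action of `L_(0)`, the commutator of `L_(1)` with the modes of `L`, and
locality. -/
structure IsRankOneBracket {F : Type*} [Field F] (r : ℕ → F[X] →ₗ[F] F[X] →ₗ[F] F[X]) : Prop where
  zero_X_mul (f h : F[X]) : r 0 (X * f) h = 0
  succ_X_mul (k : ℕ) (f h : F[X]) : r (k + 1) (X * f) h = -(k + 1 : F) • r k f h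
  succ_one_X_mul (k : ℕ) (h : F[X]) :
    r (k + 1) 1 (X * h) = X * r (k + 1) 1 h + (k + 1 : F) • r k 1 h
  zero_one (h : F[X]) : r 0 1 h = X * h
  one_one_comm (k : ℕ) (h : F[X]) :
    r 1 1 (r k 1 h) = r k 1 (r 1 1 h) + r (k + 1) (r 0 1 1) h + r k (r 1 1 1) h
  exists_forall_le : ∃ N, ∀ k, N ≤ k → r k 1 1 = 0

namespace IsRankOneBracket

variable {F : Type*} [Field F] {r : ℕ → F[X] →ₗ[F] F[X] →ₗ[F] F[X]}

theorem one_eq_sum_derivative (hr : IsRankOneBracket r) (k : ℕ) (h : F[X]) :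
    r k 1 h = ∑ j ∈ range (k + 1), (k.choose j : F) • (derivative^[j] h * r (k - j) 1 1) := by
  induction h using Polynomial.induction_on' generalizing k with
  | add p q hp hq =>
    simp only [map_add, hp, hq, iterate_map_add, add_mul, smul_add, sum_add_distrib]
  | monomial n a =>
    rw [← C_mul_X_pow_eq_monomial, ← smul_eq_C_mul, map_smul]
    simp only [iterate_derivative_smul, smul_mul_assoc, smul_comm _ a, ← smul_sum]
    congr 1
    induction n generalizing k with
    | zero =>
      rw [sum_range_succ', sum_eq_zero fun j _ ↦ by simp]
      simp
    | succ n ih =>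
      rw [pow_succ]
      cases k with
      | zero => simp [hr.zero_one]; ring
      | succ k =>
        rw [mul_comm, hr.succ_one_X_mul, ih, ih, mul_comm X (X ^ n)]
        simp only [iterate_derivative_mul_X, add_mul, smul_add, sum_add_distrib, mul_sum, smul_sum]
        congr 1
        · exact sum_congr rfl fun j _ ↦ by rw [mul_smul_comm]; ring_nf
        · rw [eq_comm, sum_range_succ', zero_smul, zero_mul, smul_zero, add_zero]
          refine sum_congr rfl fun j _ ↦ ?_
          have choose_mul : ((k + 1).choose (j + 1) : F) * (j + 1) = (k + 1) * k.choose j := by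
            exact_mod_cast congrArg (Nat.cast (R := F)) (Nat.add_one_mul_choose_eq k j).symm
          rw [Nat.add_sub_add_right, Nat.sub_zero, ← Nat.cast_smul_eq_nsmul F,
            smul_mul_assoc, smul_smul, smul_smul, Nat.cast_succ, choose_mul,
            Nat.add_sub_add_right]

theorem one_one (hr : IsRankOneBracket r) (h : F[X]) :
    r 1 1 h = h * r 1 1 1 + derivative h * X := by
  simp [hr.one_eq_sum_derivative 1 h, sum_range_succ, hr.zero_one]

theorem one_one_comm' (hr : IsRankOneBracket r) (k : ℕ) (h : F[X]) :
    r 1 1 (r k 1 h) = r k 1 (r 1 1 h) - (k + 1 : F) • r k 1 h + r k (r 1 1 1) h := by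
  rw [hr.one_one_comm, hr.zero_one, hr.succ_X_mul, neg_smul, ← sub_eq_add_neg]

theorem natDegree_apply_one_le (hr : IsRankOneBracket r) {d : ℕ}
    (hd : ∀ k, (r k 1 1).natDegree ≤ d) (k : ℕ) (f : F[X]) : (r k f 1).natDegree ≤ d := by
  induction f using Polynomial.induction_on' with
  | add p q hp hq =>
    rw [map_add, LinearMap.add_apply]
    exact natDegree_add_le_of_degree_le hp hq
  | monomial n a =>
    rw [← C_mul_X_pow_eq_monomial, ← smul_eq_C_mul, LinearMap.map_smul₂]
    refine (natDegree_smul_le _ _).trans ?_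
    induction n generalizing k with
    | zero => simpa using hd k
    | succ n ih =>
      rw [pow_succ']
      cases k with
      | zero => simp [hr.zero_X_mul]
      | succ k => exact hr.succ_X_mul k _ 1 ▸ (natDegree_smul_le _ _).trans (ih k)

theorem exists_forall_natDegree_le (hr : IsRankOneBracket r) :
    ∃ K, r K 1 1 ≠ 0 ∧ ∀ k, (r k 1 1).natDegree ≤ (r K 1 1).natDegree := by
  obtain ⟨N, hN⟩ := hr.exists_forall_le
  obtain ⟨K, -, hK⟩ :=
    (range (N + 1)).exists_max_image (fun k ↦ (r k 1 1).natDegree) nonempty_range_add_one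
  refine ⟨K, ne_zero_of_natDegree_gt (n := 0) ?_, fun k ↦ ?_⟩
  · simpa [hr.zero_one, Nat.one_le_iff_ne_zero, Nat.pos_iff_ne_zero] using hK 0 (by simp)
  · obtain hk | hk := lt_or_ge k N
    · exact hK k (by simp; lia)
    · simp [hN k hk]

theorem succ_smul_derivative_mul (hr : IsRankOneBracket r) (k : ℕ) :
    (k + 1 : F) • (derivative (r 1 1 1) * r k 1 1) =
      derivative (r (k + 1) 1 1) * X + (k + 2 : F) • r (k + 1) 1 1 - r (k + 1) (r 1 1 1) 1
        - ∑ j ∈ range k, ((k + 1).choose (j + 2) : F) •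
          (derivative^[j + 2] (r 1 1 1) * r (k - (j + 1)) 1 1) := by
  have hcomm := hr.one_one_comm' (k + 1) 1
  rw [hr.one_one, hr.one_eq_sum_derivative (k + 1) (r 1 1 1), sum_range_succ', sum_range_succ',
    mul_comm _ (r 1 1 1)] at hcomm
  simp only [zero_add, Nat.choose_one_right, Nat.choose_zero_right, Function.iterate_one,
    Function.iterate_zero_apply, Nat.add_sub_add_right, Nat.add_sub_cancel, Nat.sub_zero] at hcomm
  push_cast at hcomm
  linear_combination (norm := skip) -hcomm
  simp only [add_assoc, one_add_one_eq_two]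
  module

variable [CharZero F]

-- Otherwise the left side of `succ_smul_derivative_mul`, for `k` maximizing the degree of
-- `r k 1 1`, would have strictly larger degree than every term on the right.
theorem natDegree_one_one_one_le (hr : IsRankOneBracket r) : (r 1 1 1).natDegree ≤ 1 := by
  by_contra! one_lt
  obtain ⟨k, hk, hd⟩ := hr.exists_forall_natDegree_le
  set d := (r k 1 1).natDegree with hd_def
  have natDegree_derivative_mul_X_le : (derivative (r (k + 1) 1 1) * X).natDegree ≤ d := by
    refine natDegree_le_iff_coeff_eq_zero.2 fun m hm ↦ ?_
    rw [coeff_derivative_mul_X, coeff_eq_zero_of_natDegree_lt ((hd _).trans_lt hm), mul_zero]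
  have natDegree_sum_le := natDegree_sum_le_of_forall_le (range k) _ fun j _ ↦
    (natDegree_smul_le ((k + 1).choose (j + 2) : F) _).trans
      (natDegree_mul_le_of_le ((natDegree_iterate_derivative (r 1 1 1) (j + 2)).trans
        (Nat.sub_le_sub_left (Nat.le_add_left 2 j) _)) (hd (k - (j + 1))))
  have natDegree_le := natDegree_sub_le_of_le (natDegree_sub_le_of_le (natDegree_add_le_of_le
    natDegree_derivative_mul_X_le ((natDegree_smul_le (k + 2 : F) _).trans (hd (k + 1))))
    (hr.natDegree_apply_one_le hd (k + 1) (r 1 1 1))) natDegree_sum_le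
  have derivative_ne_zero : derivative (r 1 1 1) ≠ 0 := by
    rw [Ne, derivative_eq_zero]
    lia
  rw [← hr.succ_smul_derivative_mul, smul_eq_C_mul, natDegree_C_mul (Nat.cast_add_one_ne_zero k),
    natDegree_mul derivative_ne_zero hk, natDegree_derivative, ← hd_def] at natDegree_le
  lia

theorem one_one_one (hr : IsRankOneBracket r) : r 1 1 1 = 2 := by
  obtain ⟨a, b, hg⟩ := exists_eq_X_add_C_of_natDegree_le_one hr.natDegree_one_one_one_le
  have r_one_g (h : F[X]) : r 1 (r 1 1 1) h = b • r 1 1 h - a • (X * h) := by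
    have r_one_X := hr.succ_X_mul 0 1 h
    rw [mul_one, hr.zero_one] at r_one_X
    rw [hg, ← smul_eq_C_mul, map_add, ← mul_one (C b), ← smul_eq_C_mul, LinearMap.add_apply,
      LinearMap.map_smul₂, LinearMap.map_smul₂, r_one_X]
    module
  have smul_one_one (h : F[X]) : (b - 2) • r 1 1 h = a • (X * h) := by
    have hcomm := hr.one_one_comm' 1 h
    rw [r_one_g] at hcomm
    push_cast at hcomm
    linear_combination (norm := module) -hcomm
  have hX : (b - 2) • (X : F[X]) = 0 := by
    have h1 := smul_one_one 1
    have h2 := smul_one_one X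
    rw [hr.one_one, derivative_X, one_mul, smul_add, ← mul_smul_comm, h1] at h2
    rw [mul_one, mul_smul_comm] at h2
    linear_combination (norm := module) h2
  have hb : b = 2 := sub_eq_zero.1 ((smul_eq_zero_iff_left X_ne_zero).1 hX)
  have ha : a = 0 := by
    have h1 := smul_one_one 1
    rw [hb, sub_self, zero_smul, mul_one, eq_comm] at h1
    exact (smul_eq_zero_iff_left X_ne_zero).1 h1
  rw [hg, ha, hb, C_0, zero_mul, zero_add, C_ofNat]

theorem one_one_eq_zero (hr : IsRankOneBracket r) {k : ℕ} (hk : 2 ≤ k) : r k 1 1 = 0 := by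
  have two_eq : (2 : F[X]) = (2 : F) • 1 := by rw [smul_eq_C_mul, mul_one, C_ofNat]
  have derivative_mul_X : derivative (r k 1 1) * X = (1 - k : F) • r k 1 1 := by
    have hcomm := hr.one_one_comm' k 1
    rw [hr.one_one, hr.one_one_one, two_eq, LinearMap.map_smul₂, map_smul, mul_smul_comm,
      mul_one] at hcomm
    linear_combination (norm := module) hcomm
  ext m
  have hm := congrArg (coeff · m) derivative_mul_X
  rw [coeff_derivative_mul_X, coeff_smul, smul_eq_mul] at hm
  have mul_coeff : ((m + k : ℕ) - (1 : ℕ) : F) * (r k 1 1).coeff m = 0 := by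
    push_cast
    linear_combination hm
  refine (mul_eq_zero.1 mul_coeff).resolve_left fun h ↦ ?_
  have := Nat.cast_injective (sub_eq_zero.1 h)
  lia

theorem succ_one (hr : IsRankOneBracket r) (k : ℕ) (h : F[X]) :
    r (k + 1) 1 h = derivative^[k + 1] h * X + (2 * (k + 1) : F) • derivative^[k] h := by
  rw [hr.one_eq_sum_derivative, sum_range_succ, sum_range_succ, sum_eq_zero fun j hj ↦ by
    rw [hr.one_one_eq_zero (by rw [mem_range] at hj; lia), mul_zero, smul_zero]]
  rw [Nat.sub_self, hr.zero_one, Nat.add_sub_cancel_left, hr.one_one_one,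
    Nat.choose_succ_self_right, Nat.choose_self, mul_one, zero_add, add_comm,
    Nat.cast_one, one_smul, mul_two]
  push_cast
  module

end IsRankOneBracket

namespace VertexAlgebra

variable {V : Type*} [AddCommGroup V] [Module ℂ V] {W : VertexAlgebra V}

section ConformalCoordinate

variable [Module ℂ[X] V] {L : V} {c : V →ₗ[ℂ[X]] ℂ[X]}

namespace IsConformalCoordinate

theorem D_eq_zero_of_apply_eq_zero (hc : W.IsConformalCoordinate L c) {x : V} (hx : c x = 0) :
    W.D x = 0 := by
  simpa only [hx, zero_smul, sub_zero] using hc.D_sub_smul x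

theorem P_smul_self_left (hc : W.IsConformalCoordinate L c) (k : ℕ) (x y : V) :
    W.P k (c x • L) y = W.P k x y := by
  have h := commutes_of_D_eq_zero (hc.D_sub_smul x) y k
  rw [map_sub, LinearMap.sub_apply, sub_eq_zero] at h
  exact h.symm

theorem P_smul_self_right (hc : W.IsConformalCoordinate L c) (k : ℕ) (x y : V) :
    W.P k y (c x • L) = W.P k y x := by
  have h := (commutes_of_D_eq_zero (hc.D_sub_smul x) y).symm k
  rw [map_sub, sub_eq_zero] at h
  exact h.symm

theorem apply_smul_self (hc : W.IsConformalCoordinate L c) (q : ℂ[X]) : c (q • L) = q := by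
  rw [map_smul, hc.apply_self, smul_eq_mul, mul_one]

end IsConformalCoordinate

theorem map_D_eq_X_mul [W.IsTranslationModule] (c : V →ₗ[ℂ[X]] ℂ[X]) (x : V) :
    c (W.D x) = X * c x := by
  rw [← W.X_smul, map_smul, smul_eq_mul]

section CoordinateBracket

variable [IsScalarTower ℂ ℂ[X] V]

variable (W) in
/-- The products `x_(k) y`, `k ≥ 0`, of elements of `ℂ[X] • L`, read off in the coordinate `c`. -/
noncomputable def coordinateBracket (L : V) (c : V →ₗ[ℂ[X]] ℂ[X]) (k : ℕ) :
    ℂ[X] →ₗ[ℂ] ℂ[X] →ₗ[ℂ] ℂ[X] :=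
  LinearMap.mk₂ ℂ (fun f h ↦ c (W.P k (f • L) (h • L)))
    (fun f f' h ↦ by rw [add_smul, map_add, LinearMap.add_apply, map_add])
    (fun a f h ↦ by rw [smul_assoc, LinearMap.map_smul₂, LinearMap.map_smul_of_tower])
    (fun f h h' ↦ by rw [add_smul, map_add, map_add])
    fun a f h ↦ by rw [smul_assoc, LinearMap.map_smul, LinearMap.map_smul_of_tower]

theorem coordinateBracket_apply (k : ℕ) (f h : ℂ[X]) :
    W.coordinateBracket L c k f h = c (W.P k (f • L) (h • L)) := rfl

variable [W.IsTranslationModule]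

theorem IsConformalCoordinate.isRankOneBracket (hc : W.IsConformalCoordinate L c) :
    IsRankOneBracket (W.coordinateBracket L c) where
  zero_X_mul f h := by
    simp [coordinateBracket_apply, mul_smul, W.X_smul, W.transl_inv]
  succ_X_mul k f h := by
    rw [coordinateBracket_apply, mul_smul, W.X_smul, W.transl_inv, LinearMap.map_smul_of_tower,
      Nat.cast_succ, add_sub_cancel_right, coordinateBracket_apply]
    push_cast
    rfl
  succ_one_X_mul k h := by
    rw [coordinateBracket_apply, mul_smul, W.X_smul, W.P_D, map_add, map_D_eq_X_mul,
      c.map_smul_of_tower, Nat.cast_succ, add_sub_cancel_right, coordinateBracket_apply,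
      coordinateBracket_apply]
    push_cast
    rfl
  zero_one h := by
    rw [coordinateBracket_apply, one_smul, Nat.cast_zero, hc.P_zero, map_D_eq_X_mul,
      hc.apply_smul_self]
  one_one_comm k h := by
    simp only [coordinateBracket_apply, one_smul, hc.P_smul_self_left, hc.P_smul_self_right]
    rw [W.P_natCast_P L L 1 k (h • L), ← map_add, ← map_add, add_assoc]
    simp [sum_range_succ, add_comm (1 : ℤ)]
  exists_forall_le := by
    obtain ⟨N, hN⟩ := W.field_ax L L
    refine ⟨N, fun k hk ↦ ?_⟩
    rw [coordinateBracket_apply, one_smul, hN k hk, map_zero]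

end CoordinateBracket

namespace IsConformalCoordinate

variable [W.IsTranslationModule] [IsScalarTower ℂ ℂ[X] V]

theorem apply_P_succ_self (hc : W.IsConformalCoordinate L c) (k : ℕ) (x : V) :
    c (W.P (k + 1 : ℕ) L x)
      = derivative^[k + 1] (c x) * X + (2 * (k + 1) : ℂ) • derivative^[k] (c x) := by
  rw [← hc.isRankOneBracket.succ_one, coordinateBracket_apply, one_smul, hc.P_smul_self_right]

theorem apply_P_succ_of_apply_eq_C_mul_X_pow (hc : W.IsConformalCoordinate L c) {k n : ℕ}
    (hk : k ≤ n) {x : V} {κ : ℂ} (hx : c x = C κ * X ^ n) :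
    c (W.P (k + 1 : ℕ) L x)
      = C (κ * (n.descFactorial (k + 1) + 2 * (k + 1) * n.descFactorial k)) * X ^ (n - k) := by
  rw [hc.apply_P_succ_self, hx, iterate_derivative_C_mul, iterate_derivative_C_mul,
    iterate_derivative_X_pow_eq_natCast_mul, iterate_derivative_X_pow_eq_natCast_mul,
    smul_eq_C_mul]
  obtain rfl | hkn := hk.eq_or_lt
  · simp only [Nat.descFactorial_succ, tsub_self, zero_mul, CharP.cast_eq_zero,
      le_add_iff_nonneg_right, zero_le, Nat.sub_eq_zero_of_le, pow_zero, mul_one, mul_zero, map_mul,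
      map_add, map_natCast, map_one, zero_add]
    ring
  · obtain ⟨m, rfl⟩ := Nat.exists_eq_add_of_lt hkn
    rw [show k + m + 1 - (k + 1) = m by lia, show k + m + 1 - k = m + 1 by lia, pow_succ]
    simp only [Nat.descFactorial_succ, Nat.cast_mul, map_mul, map_add, map_natCast, map_one]
    ring

theorem D_P_self_eq_zero (hc : W.IsConformalCoordinate L c) {k : ℕ} (hk : 2 ≤ k) :
    W.D (W.P k L L) = 0 := by
  refine hc.D_eq_zero_of_apply_eq_zero ?_
  simpa only [coordinateBracket_apply, one_smul] using hc.isRankOneBracket.one_one_eq_zero hk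

theorem apply_P_one_self (hc : W.IsConformalCoordinate L c) : c (W.P 1 L L) = 2 := by
  simpa only [coordinateBracket_apply, one_smul, Nat.cast_one] using hc.isRankOneBracket.one_one_one

theorem apply_eq_C_mul_X_pow (hc : W.IsConformalCoordinate L c) {n : ℕ} {x : V}
    (hx : W.P 1 L x = (n + 2 : ℂ) • x) : c x = C ((c x).coeff n) * X ^ n := by
  have hcx := hc.apply_P_succ_self 0 x
  rw [zero_add, Nat.cast_one, hx, LinearMap.map_smul_of_tower] at hcx
  ext i
  have hi := congrArg (coeff · i) hcx
  simp only [Function.iterate_one, Function.iterate_zero, id_eq, coeff_add, coeff_smul,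
    coeff_derivative_mul_X, smul_eq_mul, Nat.cast_zero] at hi
  obtain rfl | hin := eq_or_ne i n
  · simp
  · have : ((n : ℂ) - i) * (c x).coeff i = 0 := by linear_combination hi
    simpa [hin, sub_eq_zero, hin.symm] using this

end IsConformalCoordinate

variable (W) in
/-- A conformal coordinate whose generator is a Virasoro element: `L_(1) L = 2 L`. -/
structure IsVirasoroCoordinate (L : V) (c : V →ₗ[ℂ[X]] ℂ[X]) : Prop extends
    W.IsConformalCoordinate L c where
  P_one_self : W.P 1 L L = (2 : ℂ) • L

theorem IsVirasoroCoordinate.P_one_P_self (hc : W.IsVirasoroCoordinate L c) (k : ℤ) :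
    W.P 1 L (W.P k L L) = (3 - k : ℂ) • W.P k L L := by
  have hcomm := W.P_natCast_P L L 1 k L
  simp only [sum_range_succ, sum_range_zero, Nat.cast_one, Nat.cast_zero, Nat.choose_zero_right,
    Nat.choose_self, one_smul, zero_add, sub_zero, hc.P_zero, W.transl_inv, hc.P_one_self,
    LinearMap.map_smul, LinearMap.smul_apply, add_sub_cancel_left] at hcomm
  rw [hcomm]
  push_cast
  module

variable [W.IsTranslationModule] [IsScalarTower ℂ ℂ[X] V]

theorem IsConformalCoordinate.exists_isVirasoroCoordinate (hc : W.IsConformalCoordinate L c) :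
    ∃ L', W.IsVirasoroCoordinate L' c := by
  let τ := W.P 1 L L - (2 : ℂ) • L
  have D_τ : W.D τ = 0 := by
    refine hc.D_eq_zero_of_apply_eq_zero ?_
    rw [map_sub, hc.apply_P_one_self, LinearMap.map_smul_of_tower, hc.apply_self, smul_eq_C_mul,
      mul_one, map_ofNat, sub_self]
  have P_zero_τ (y : V) : W.P 0 τ y = 0 := commutes_of_D_eq_zero D_τ y 0
  have P_one_τ (y : V) : W.P 1 τ y = 0 := commutes_of_D_eq_zero D_τ y 1
  have P_one_apply_τ (y : V) : W.P 1 y τ = 0 := (commutes_of_D_eq_zero D_τ y).symm 1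
  have c_τ : c τ = 0 := by
    simpa [D_τ] using (map_D_eq_X_mul (W := W) c τ).symm
  refine ⟨L + (1 / 2 : ℂ) • τ, ⟨fun y ↦ ?_, ?_, fun x ↦ ?_⟩, ?_⟩
  · rw [map_add, LinearMap.add_apply, hc.P_zero, LinearMap.map_smul₂, P_zero_τ, smul_zero,
      add_zero]
  · rw [map_add, LinearMap.map_smul_of_tower, c_τ, smul_zero, add_zero, hc.apply_self]
  · rw [smul_add, ← sub_sub, map_sub, hc.D_sub_smul, smul_comm, LinearMap.map_smul,
      mem_constants.1 (W.constants.smul_mem (c x) (mem_constants.2 D_τ)), smul_zero, sub_zero]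
  · rw [map_add, map_add, LinearMap.add_apply, LinearMap.add_apply, LinearMap.map_smul₂,
      LinearMap.map_smul₂, LinearMap.map_smul, P_one_apply_τ, P_one_τ, P_one_τ]
    simp only [τ]
    module

namespace IsVirasoroCoordinate

theorem P_self_eq_zero (hc : W.IsVirasoroCoordinate L c) {k : ℕ} (hk : 2 ≤ k) (hk₃ : k ≠ 3) :
    W.P k L L = 0 := by
  have P_one_P : W.P 1 L (W.P k L L) = 0 :=
    (commutes_of_D_eq_zero (hc.D_P_self_eq_zero hk) L).symm 1
  rw [hc.P_one_P_self, Int.cast_natCast] at P_one_P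
  refine (smul_eq_zero.1 P_one_P).resolve_left fun h ↦ hk₃ ?_
  exact_mod_cast (sub_eq_zero.1 h).symm

theorem P_natCast_P_self (hc : W.IsVirasoroCoordinate L c) (m : ℕ) (k : ℤ) (x : V) :
    W.P m L (W.P k L x) = W.P k L (W.P m L x) + ((m : ℂ) - k) • W.P (m + k - 1) L x
      + (m.choose 3 : ℂ) • W.P (m + k - 3) (W.P 3 L L) x := by
  have P_two : W.P 2 L L = 0 := hc.P_self_eq_zero (k := 2) le_rfl (by decide)
  have hcomm := W.commutator_eq_sum (N := 4) (a := L) (b := L)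
    (fun j hj ↦ hc.P_self_eq_zero (by lia) (by lia)) m k x
  simp only [sum_range_succ, sum_range_zero, P_two, Nat.cast_one, Nat.cast_zero, Nat.cast_ofNat,
    Ring.choose_natCast, Nat.choose_zero_right, Nat.choose_one_right, Int.cast_natCast, one_smul,
    zero_add, sub_zero, hc.P_zero, W.transl_inv, hc.P_one_self, LinearMap.map_smul,
    LinearMap.smul_apply, map_zero, LinearMap.zero_apply, smul_zero, add_zero] at hcomm
  rw [sub_eq_iff_eq_add'.1 hcomm]
  push_cast
  module

theorem P_neg_one_P_three (hc : W.IsVirasoroCoordinate L c) :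
    W.P (-1) L (W.P 3 L L) = W.P (-1) (W.P 3 L L) L :=
  (commutes_of_D_eq_zero (hc.D_P_self_eq_zero (k := 3) (by decide)) L).mul_comm.symm

theorem coeff_P_neg_one_P_three_of_P_neg_one (hc : W.IsVirasoroCoordinate L c) :
    (c (W.P (-1) (W.P 3 L L) L)).coeff 0 = -11 / 5 := by
  have P_two_self : W.P 2 L L = 0 := hc.P_self_eq_zero (k := 2) le_rfl (by decide)
  let y := W.P (-1) L L
  have P_one_y : W.P 1 L y = ((2 : ℕ) + 2 : ℂ) • y := by
    norm_num [y, hc.P_one_P_self]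
  have P_two_y : W.P 2 L y = (3 : ℂ) • W.D L := by
    rw [← Nat.cast_two, hc.P_natCast_P_self]
    norm_num [P_two_self, hc.P_zero]
  have P_three_y : W.P 3 L y = (8 : ℂ) • L + (2 : ℂ) • W.P (-1) (W.P 3 L L) L := by
    rw [← Nat.cast_three, hc.P_natCast_P_self]
    norm_num [hc.P_one_self, hc.P_neg_one_P_three]
    module
  have c_y := hc.apply_eq_C_mul_X_pow P_one_y
  have c_P_two_y := hc.apply_P_succ_of_apply_eq_C_mul_X_pow (k := 1) (by lia) c_y
  have c_P_three_y := hc.apply_P_succ_of_apply_eq_C_mul_X_pow (k := 2) (by lia) c_y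
  simp only [Nat.reduceAdd, Nat.cast_ofNat, P_two_y, P_three_y, map_add, c.map_smul_of_tower,
    map_D_eq_X_mul, hc.apply_self] at c_P_two_y c_P_three_y
  have h₂ := congrArg (coeff · 1) c_P_two_y
  have h₃ := congrArg (coeff · 0) c_P_three_y
  norm_num [Nat.descFactorial] at h₂ h₃
  linear_combination h₃ / 2 - 3 / 5 * h₂

theorem coeff_P_neg_one_P_three_of_P_neg_three (hc : W.IsVirasoroCoordinate L c) :
    (c (W.P (-1) (W.P 3 L L) L)).coeff 0 = -37 / 45 := by
  have P_self {k : ℕ} (hk : 3 < k) : W.P k L L = 0 := hc.P_self_eq_zero (by lia) (by lia)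
  have P_two_self : W.P 2 L L = 0 := hc.P_self_eq_zero (k := 2) le_rfl (by decide)
  let x := W.P (-3) L L
  have P_one_x : W.P 1 L x = ((4 : ℕ) + 2 : ℂ) • x := by
    norm_num [x, hc.P_one_P_self]
  have P_two_x : W.P 2 L x = (5 : ℂ) • W.P (-2) L L := by
    rw [← Nat.cast_two, hc.P_natCast_P_self]
    norm_num [P_two_self]
  have P_four_P_two_x : W.P 4 L (W.P 2 L x)
      = (60 : ℂ) • L + (20 : ℂ) • W.P (-1) (W.P 3 L L) L := by
    have hcomm := hc.P_natCast_P_self 4 (-2) L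
    rw [P_self (by lia)] at hcomm
    norm_num [hc.P_one_self, Nat.choose] at hcomm
    rw [P_two_x, LinearMap.map_smul, hcomm]
    module
  have P_five_x : W.P 5 L x = (16 : ℂ) • L + (10 : ℂ) • W.P (-1) (W.P 3 L L) L := by
    have hcomm := hc.P_natCast_P_self 5 (-3) L
    rw [P_self (by lia)] at hcomm
    norm_num [hc.P_one_self, Nat.choose] at hcomm
    rw [hcomm]
    module
  have c_x := hc.apply_eq_C_mul_X_pow P_one_x
  have c_P_two_x := hc.apply_P_succ_of_apply_eq_C_mul_X_pow (k := 1) (by lia) c_x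
  have c_P_four := hc.apply_P_succ_of_apply_eq_C_mul_X_pow (k := 3) (by lia) c_P_two_x
  have c_P_five_x := hc.apply_P_succ_of_apply_eq_C_mul_X_pow (k := 4) (by lia) c_x
  simp only [Nat.reduceAdd, Nat.cast_ofNat, P_four_P_two_x, P_five_x, map_add,
    c.map_smul_of_tower, hc.apply_self] at c_P_four c_P_five_x
  have h₄ := congrArg (coeff · 0) c_P_four
  have h₅ := congrArg (coeff · 0) c_P_five_x
  norm_num [Nat.descFactorial] at h₄ h₅
  linear_combination (5.6 * h₅ - h₄) / 36

end IsVirasoroCoordinate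

theorem IsConformalCoordinate.false (hc : W.IsConformalCoordinate L c) : False := by
  obtain ⟨L', hc'⟩ := hc.exists_isVirasoroCoordinate
  have h := hc'.coeff_P_neg_one_P_three_of_P_neg_one.symm.trans
    hc'.coeff_P_neg_one_P_three_of_P_neg_three
  norm_num at h

end ConformalCoordinate

section Domain

variable [Module ℂ[X] V]

variable (W) in
theorem exists_isSubalgebra_finrank_le (hW : ∃ x, W.D x ≠ 0) :
    ∃ S : Submodule ℂ[X] V, (W.IsSubalgebra S ∧ ∃ x ∈ S, W.D x ≠ 0) ∧
      ∀ S' : Submodule ℂ[X] V, W.IsSubalgebra S' → (∃ x ∈ S', W.D x ≠ 0) →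
        Module.finrank ℂ[X] S ≤ Module.finrank ℂ[X] S' := by
  obtain ⟨x, hx⟩ := hW
  obtain ⟨S, hS, hmin⟩ := exists_minimalFor_of_wellFoundedLT
    (fun S : Submodule ℂ[X] V ↦ W.IsSubalgebra S ∧ ∃ x ∈ S, W.D x ≠ 0)
    (fun S ↦ Module.finrank ℂ[X] S) ⟨⊤, ⟨⟨trivial, fun _ _ _ _ _ ↦ trivial⟩, x, trivial, hx⟩⟩
  exact ⟨S, hS, fun S' hS' hx' ↦ (le_total _ _).elim id (hmin ⟨hS', hx'⟩)⟩

variable [W.IsTranslationModule] [IsScalarTower ℂ ℂ[X] V]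

theorem IsSubalgebra.map_subtype {S : Submodule ℂ[X] V} (hS : W.IsSubalgebra S)
    {S' : Submodule ℂ[X] S} (hS' : (restrict hS).IsSubalgebra S') :
    W.IsSubalgebra (S'.map S.subtype) where
  vac_mem := ⟨_, hS'.vac_mem, rfl⟩
  P_mem := by
    rintro n _ _ ⟨x, hx, rfl⟩ ⟨y, hy, rfl⟩
    exact ⟨_, hS'.P_mem n hx hy, rfl⟩

variable [Module.Finite ℂ[X] V]

theorem HasNoZeroDivisors.commutes (hW : W.HasNoZeroDivisors) (a b : V) : W.Commutes a b := by
  by_cases hD : ∃ x, W.D x ≠ 0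
  swap
  · exact commutes_of_D_eq_zero (not_not.1 (not_exists.1 hD a)) b
  obtain ⟨S, ⟨hS, v, hv, hDv⟩, hmin⟩ := W.exists_isSubalgebra_finrank_le hD
  have restrict_commutes (x y : S) : (restrict hS).Commutes x y := by
    by_contra hxy
    have hmin' : (restrict hS).IsMinimalNoncommutative :=
      ⟨hasNoZeroDivisors_restrict hS hW, ⟨x, y, hxy⟩, fun S' hS' ⟨z, hz, hDz⟩ ↦ by
        rw [LinearEquiv.finrank_eq
          (Submodule.equivMapOfInjective S.subtype S.injective_subtype S')]
        exact hmin _ (hS.map_subtype hS')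
          ⟨z, ⟨z, hz, rfl⟩, fun h ↦ hDz (Subtype.ext ((coe_restrict_D hS z).trans h))⟩⟩
    obtain ⟨L, c, hc⟩ := hmin'.exists_isConformalCoordinate
    exact hc.false
  refine hW.commutes_of_commutes_self (fun j ↦ ?_) hDv a b
  exact congrArg Subtype.val (restrict_commutes ⟨v, hv⟩ ⟨v, hv⟩ j)

end Domain

theorem IsFinite.commutes_of_hasNoZeroDivisors (hfin : W.IsFinite) (hW : W.HasNoZeroDivisors)
    (a b : V) : W.Commutes a b := by
  let := W.polynomialModule
  have := W.polynomialModule_isScalarTower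
  have := hfin.moduleFinite
  have : W.IsTranslationModule := ⟨W.polynomialModule_X_smul⟩
  exact hW.commutes a b

theorem IsFinite.commutes_of_isReduced (hfin : W.IsFinite) (hred : W.IsReduced) (a b : V) :
    W.Commutes a b := by
  intro n
  by_contra hne
  obtain ⟨I, hI, hdom, hnI⟩ := hfin.exists_hasNoZeroDivisors_quotient hred hne
  refine hnI ((Submodule.Quotient.mk_eq_zero I).1 ?_)
  exact (isFinite_quotient hI hfin).commutes_of_hasNoZeroDivisors hdom
    (Submodule.Quotient.mk a) (Submodule.Quotient.mk b) n

end VertexAlgebra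

theorem finite_reduced_is_nilpotent_general {V : Type*} [AddCommGroup V] [Module ℂ V]
    (W : VertexAlgebra V) (hfin : W.IsFinite) (hred : W.IsReduced) : W.lcsOf ⊤ 1 = ⊥ := by
  rw [VertexAlgebra.lcsOf, VertexAlgebra.posSpan, Submodule.span_eq_bot]
  rintro _ ⟨a, -, b, -, n, rfl⟩
  exact hfin.commutes_of_isReduced hred a b n

open VertexAlgebra in
/-- every finite reduced vertex algebra is nilpotent: the lower central
series `V^[0] = V`, `V^[n+1] = [V, V^[n]]` of the underlying Lie conformal algebra
terminates at zero. -/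
theorem finite_reduced_is_nilpotent {V : Type*} [AddCommGroup V] [Module ℂ V]
    (W : VertexAlgebra V) (hfin : W.IsFinite) (hred : W.IsReduced) :
    ∃ N : ℕ, W.lcsOf ⊤ N = ⊥ :=
  ⟨1, finite_reduced_is_nilpotent_general W hfin hred⟩
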